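/- Let Ω ⊂ R^n be open and f ∈ W^{2,1}_loc(Ω). Then there exists an increasing sequence of closed sets C_k ⊂ C_{k+1} ⊂ Ω such that f* restricted to C_k is Lipschitz continuous outside a set of 1-capacity zero, and H^{n-1}(Ω \ ∪_k C_k) = 0. -/

import Mathlib

open MeasureTheory Metric Filter Set
open scoped ENNReal Topology NNReal

noncomputable section

/-- Euclidean space ℝⁿ. -/
abbrev En (n : ℕ) := EuclideanSpace ℝ (Fin n)

variable {n : ℕ}

/-- The average of `f` over the ball `B(x,r)`. -/
def ballAvg (f : En n → ℝ) (x : En n) (r : ℝ) : ℝ :=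
  ⨍ y in Metric.ball x r, f y

open scoped Classical in
/-- The precise representative of `f`: the limit of ball averages where it exists, `0` otherwise. -/
def preciseRep (f : En n → ℝ) (x : En n) : ℝ :=
  if h : ∃ L : ℝ, Tendsto (fun r => ballAvg f x r) (nhdsWithin 0 (Set.Ioi 0)) (nhds L)
  then h.choose else 0

/-- A test function: smooth, compactly supported, with support inside `Ω`. -/
def IsTest (Ω : Set (En n)) (η : En n → ℝ) : Prop :=
  ContDiff ℝ (⊤ : ℕ∞) η ∧ HasCompactSupport η ∧ tsupport η ⊆ Ω

/-- `g` is the weak partial derivative of `f` in direction `v`, on `Ω`. -/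
def HasWeakPartialOn (Ω : Set (En n)) (f g : En n → ℝ) (v : En n) : Prop :=
  ∀ η : En n → ℝ, IsTest Ω η →
    ∫ x, f x * fderiv ℝ η x v = - ∫ x, g x * η x

/-- `g` is the weak gradient of `f` on `Ω`. -/
def HasWeakGradientOn (Ω : Set (En n)) (f : En n → ℝ) (g : En n → En n) : Prop :=
  ∀ i : Fin n, HasWeakPartialOn Ω f (fun x => g x i) (EuclideanSpace.single i 1)

/-- `f ∈ W^{1,p}(ℝⁿ)` with weak gradient `g`. -/
def MemW1p (p : ℝ) (f : En n → ℝ) (g : En n → En n) : Prop :=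
  AEStronglyMeasurable f volume ∧ AEStronglyMeasurable g volume ∧
  HasWeakGradientOn Set.univ f g ∧
  Integrable (fun x => |f x| ^ p) ∧ Integrable (fun x => ‖g x‖ ^ p)

/-- `f ∈ W^{1,p}_loc(Ω)` with weak gradient `g`. -/
def MemW1pLoc (p : ℝ) (Ω : Set (En n)) (f : En n → ℝ) (g : En n → En n) : Prop :=
  AEStronglyMeasurable f volume ∧ AEStronglyMeasurable g volume ∧
  HasWeakGradientOn Ω f g ∧
  ∀ K : Set (En n), K ⊆ Ω → IsCompact K →
    IntegrableOn (fun x => |f x| ^ p) K ∧ IntegrableOn (fun x => ‖g x‖ ^ p) K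

/-- `f ∈ W^{2,p}_loc(Ω)` with weak gradient `g` and weak second derivatives `h`. -/
def MemW2pLoc (p : ℝ) (Ω : Set (En n)) (f : En n → ℝ)
    (g : En n → En n) (h : En n → Fin n → En n) : Prop :=
  AEStronglyMeasurable f volume ∧ AEStronglyMeasurable g volume ∧
  HasWeakGradientOn Ω f g ∧
  (∀ i : Fin n, HasWeakGradientOn Ω (fun x => g x i) (fun x => h x i)) ∧
  ∀ K : Set (En n), K ⊆ Ω → IsCompact K →
    IntegrableOn (fun x => |f x| ^ p) K ∧ IntegrableOn (fun x => ‖g x‖ ^ p) K ∧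
    ∀ i : Fin n, IntegrableOn (fun x => ‖h x i‖ ^ p) K

/-- `f ∈ W^{2,p}(ℝⁿ)` with weak gradient `g` and weak second derivatives `h`. -/
def MemW2p (p : ℝ) (f : En n → ℝ) (g : En n → En n) (h : En n → Fin n → En n) : Prop :=
  AEStronglyMeasurable f volume ∧ AEStronglyMeasurable g volume ∧
  HasWeakGradientOn Set.univ f g ∧
  (∀ i : Fin n, HasWeakGradientOn Set.univ (fun x => g x i) (fun x => h x i)) ∧
  Integrable (fun x => |f x| ^ p) ∧ Integrable (fun x => ‖g x‖ ^ p) ∧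
  ∀ i : Fin n, Integrable (fun x => ‖h x i‖ ^ p)

/-- The `p`-capacity of a compact set. -/
def capK (p : ℝ) (F : Set (En n)) : ℝ≥0∞ :=
  ⨅ (g : En n → ℝ) (_ : ContDiff ℝ (⊤ : ℕ∞) g ∧ HasCompactSupport g ∧ ∀ x ∈ F, 1 ≤ g x),
    ∫⁻ x, (‖fderiv ℝ g x‖₊ : ℝ≥0∞) ^ p

/-- The `p`-capacity of an open set, by inner regularity over compact subsets. -/
def capOpen (p : ℝ) (U : Set (En n)) : ℝ≥0∞ :=
  ⨆ (F : Set (En n)) (_ : F ⊆ U ∧ IsCompact F), capK p F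

/-- The `p`-capacity of an arbitrary set, by outer regularity over open supersets. -/
def cap (p : ℝ) (E : Set (En n)) : ℝ≥0∞ :=
  ⨅ (U : Set (En n)) (_ : E ⊆ U ∧ IsOpen U), capOpen p U

/-- `f` restricted to `s` is Lipschitz outside a subset of `s` of `p`-capacity zero. -/
def LipschitzOnQE (p : ℝ) (f : En n → ℝ) (s : Set (En n)) : Prop :=
  ∃ N : Set (En n), N ⊆ s ∧ cap p N = 0 ∧ ∃ K : ℝ≥0, LipschitzOnWith K f (s \ N)

/-- The multiplicity function: the number of preimages of `y` in `A` under `φ`. -/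
def Nphi (φ : En n → En n) (A : Set (En n)) (y : En n) : ℝ≥0∞ :=
  Measure.count {x ∈ A | φ x = y}

end

/-!
Let `g` be the weak gradient of `f` and `M_ρ g(x)` the supremum of the averages of `‖g‖` over the
balls `B(x, r)`, `r ≤ ρ`.

By the Poincaré inequality, the averages of `f` over two comparable balls near `x` of radius about
`r` differ by at most `C M_ρ g(x) r`. Summing over dyadic radii, they converge as `r → 0`, and the
limit `f*` is Lipschitz on every bounded set that stays away from `Ωᶜ` and on which `M_ρ g` is
bounded. As `M_ρ g` is lower semicontinuous, its sublevel sets are closed.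

It remains to see that `{M_ρ g = ∞ for all ρ}` is `H^{n-1}`-null. The components `u` of `g` are
locally `W^{1,1}`. For compactly supported `C¹` functions `u`, the `(n-1)`-content of `{M_1 u > t}`
is at most `C ‖∇u‖₁ / t`, a boxing inequality: around a point where an average of `|u|` exceeds `t`
there is a ball `B(x, r)` with `r^{n-1} ≤ C ∫_{B(x, r)} |∇u| / t`, or with
`r^{n-1} ≤ C ∫_{B(x, r)} |∇w|` for a smooth cutoff `w` of a superlevel set of `|u|`, and a Vitali
covering sums these bounds. The general case follows by approximating `u` fast by mollifications
`u_j`, since `M u ≤ M u_0 + ∑ M (u_{j+1} - u_j)`.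
-/

section Poincare

variable {E F : Type*} [NormedAddCommGroup E] [NormedSpace ℝ E] [NormedAddCommGroup F]
  [NormedSpace ℝ F]

lemma hasDerivAt_comp_segment {v : E → F} (hv : Differentiable ℝ v) (y z : E) (s : ℝ) :
    HasDerivAt (fun s : ℝ => v ((1 - s) • z + s • y))
      (fderiv ℝ v ((1 - s) • z + s • y) (y - z)) s := by
  have hline : HasDerivAt (fun s : ℝ => (1 - s) • z + s • y) (y - z) s := by
    refine ((((hasDerivAt_id s).const_sub 1).smul_const z).fun_add
      ((hasDerivAt_id s).smul_const y)).congr_deriv ?_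
    rw [neg_one_smul, one_smul, neg_add_eq_sub]
  exact (hv _).hasFDerivAt.comp_hasDerivAt s hline

lemma enorm_sub_le_lintegral_enorm_fderiv_segment [CompleteSpace F] {v : E → F}
    (hv : ContDiff ℝ 1 v) (y z : E) :
    ‖v y - v z‖ₑ ≤ ‖y - z‖ₑ * ∫⁻ s in Icc (0 : ℝ) 1, ‖fderiv ℝ v ((1 - s) • z + s • y)‖ₑ := by
  have hcont : Continuous fun s : ℝ => fderiv ℝ v ((1 - s) • z + s • y) :=
    (hv.continuous_fderiv one_ne_zero).comp (by fun_prop)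
  have hftc : ∫ s in (0 : ℝ)..1, fderiv ℝ v ((1 - s) • z + s • y) (y - z) = v y - v z := by
    simpa [-map_sub] using intervalIntegral.integral_eq_sub_of_hasDerivAt (a := 0) (b := 1)
      (fun s _ => hasDerivAt_comp_segment (hv.differentiable one_ne_zero) y z s)
      ((hcont.clm_apply continuous_const).intervalIntegrable 0 1)
  rw [← hftc, intervalIntegral.integral_of_le zero_le_one, ← restrict_Ioc_eq_restrict_Icc,
    ← lintegral_const_mul' _ _ enorm_ne_top]
  refine (enorm_integral_le_lintegral_enorm _).trans (lintegral_mono fun s => ?_)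
  rw [mul_comm]
  exact ContinuousLinearMap.le_opENorm _ _

variable [MeasurableSpace E] [BorelSpace E] [FiniteDimensional ℝ E] (μ : Measure E)
  [μ.IsAddHaarMeasure]

lemma setLIntegral_comp_combo_le {H : E → ℝ≥0∞} (hH : Measurable H) {s : Set E}
    (hs : Convex ℝ s) (hsm : MeasurableSet s) {q : E} (hq : q ∈ s) {a : ℝ} (ha : 0 < a)
    (ha₁ : a ≤ 1) :
    ∫⁻ z in s, H ((1 - a) • q + a • z) ∂μ
      ≤ ENNReal.ofReal (a⁻¹ ^ Module.finrank ℝ E) * ∫⁻ p in s, H p ∂μ := by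
  have hmem : ∀ z ∈ s, (1 - a) • q + a • z ∈ s := fun z hz =>
    hs hq hz (by linarith) ha.le (by ring)
  calc ∫⁻ z in s, H ((1 - a) • q + a • z) ∂μ
      = ∫⁻ z in s, s.indicator H ((1 - a) • q + a • z) ∂μ :=
        setLIntegral_congr_fun hsm fun z hz => (indicator_of_mem (hmem z hz) H).symm
    _ ≤ ∫⁻ z, s.indicator H ((1 - a) • q + a • z) ∂μ := setLIntegral_le_lintegral _ _
    _ = ∫⁻ y, s.indicator H ((1 - a) • q + y) ∂(μ.map (a • ·)) := by
        have := hH.indicator hsm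
        rw [lintegral_map (by fun_prop) (by fun_prop)]
    _ = ENNReal.ofReal (a⁻¹ ^ Module.finrank ℝ E) * ∫⁻ p in s, H p ∂μ := by
        rw [Measure.map_addHaar_smul _ ha.ne', lintegral_smul_measure,
          lintegral_add_left_eq_self (μ := μ) (s.indicator H), lintegral_indicator hsm,
          smul_eq_mul, abs_of_pos (by positivity), inv_pow]

/- One of the weights `a`, `1 - a` is at least `1 / 2`; the corresponding variable is integrated
first, so that the change of variables costs at most `2 ^ finrank ℝ E`. -/
lemma lintegral_lintegral_comp_combo_le {H : E → ℝ≥0∞} (hH : Measurable H) {s : Set E}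
    (hs : Convex ℝ s) (hsm : MeasurableSet s) {a : ℝ} (ha : a ∈ Icc 0 1) :
    ∫⁻ y in s, ∫⁻ z in s, H ((1 - a) • z + a • y) ∂μ ∂μ
      ≤ 2 ^ Module.finrank ℝ E * μ s * ∫⁻ p in s, H p ∂μ := by
  wlog hhalf : 1 / 2 ≤ a generalizing a
  · have hflip := this (a := 1 - a) ⟨by linarith [ha.2], by linarith [ha.1]⟩ (by linarith)
    rw [lintegral_lintegral_swap (by fun_prop)]
    simpa only [sub_sub_cancel, add_comm] using hflip
  have hscale : ENNReal.ofReal (a⁻¹ ^ Module.finrank ℝ E) ≤ 2 ^ Module.finrank ℝ E := by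
    rw [ENNReal.ofReal_pow (inv_nonneg.2 ha.1)]
    gcongr
    rw [← ENNReal.ofReal_ofNat]
    exact ENNReal.ofReal_le_ofReal (by rw [inv_le_comm₀ (by linarith) two_pos]; linarith)
  rw [lintegral_lintegral_swap (by fun_prop)]
  calc ∫⁻ z in s, ∫⁻ y in s, H ((1 - a) • z + a • y) ∂μ ∂μ
      ≤ ∫⁻ _ in s, 2 ^ Module.finrank ℝ E * ∫⁻ p in s, H p ∂μ ∂μ :=
        setLIntegral_mono' hsm fun z hz =>
          (setLIntegral_comp_combo_le μ hH hs hsm hz (by linarith) ha.2).trans (by gcongr)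
    _ = 2 ^ Module.finrank ℝ E * μ s * ∫⁻ p in s, H p ∂μ := by
        rw [setLIntegral_const, mul_right_comm]

theorem lintegral_lintegral_enorm_sub_le_fderiv [CompleteSpace F] {v : E → F}
    (hv : ContDiff ℝ 1 v) {s : Set E} (hs : Convex ℝ s) (hsm : MeasurableSet s)
    (hsb : Bornology.IsBounded s) :
    ∫⁻ y in s, ∫⁻ z in s, ‖v y - v z‖ₑ ∂μ ∂μ
      ≤ ediam s * (2 ^ Module.finrank ℝ E * μ s * ∫⁻ p in s, ‖fderiv ℝ v p‖ₑ ∂μ) := by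
  set H : E → ℝ≥0∞ := fun p => ‖fderiv ℝ v p‖ₑ
  have hH : Measurable H := (hv.continuous_fderiv one_ne_zero).enorm.measurable
  have hdiam : ediam s ≠ ∞ := hsb.ediam_ne_top
  have hmeas : AEMeasurable (Function.uncurry fun (y : E) (a : ℝ) =>
      ∫⁻ z in s, H ((1 - a) • z + a • y) ∂μ)
      ((μ.restrict s).prod (volume.restrict (Icc (0 : ℝ) 1))) :=
    (Measurable.lintegral_prod_right'
      (f := fun q : (E × ℝ) × E => H ((1 - q.1.2) • q.2 + q.1.2 • q.1.1))
      (by fun_prop)).aemeasurable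
  calc ∫⁻ y in s, ∫⁻ z in s, ‖v y - v z‖ₑ ∂μ ∂μ
      ≤ ∫⁻ y in s, ∫⁻ z in s, ediam s *
          (∫⁻ a in Icc (0 : ℝ) 1, H ((1 - a) • z + a • y)) ∂μ ∂μ := by
        refine setLIntegral_mono' hsm fun y hy => setLIntegral_mono' hsm fun z hz => ?_
        refine (enorm_sub_le_lintegral_enorm_fderiv_segment hv y z).trans ?_
        gcongr
        exact (edist_eq_enorm_sub y z).symm.trans_le (edist_le_ediam_of_mem hy hz)
    _ = ediam s * ∫⁻ a in Icc (0 : ℝ) 1, ∫⁻ y in s, ∫⁻ z in s, H ((1 - a) • z + a • y) ∂μ ∂μ := by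
        simp_rw [lintegral_const_mul' _ _ hdiam]
        rw [← lintegral_lintegral_swap hmeas]
        congr! with y
        rw [lintegral_lintegral_swap (by fun_prop)]
    _ ≤ ediam s * ∫⁻ _ in Icc (0 : ℝ) 1, 2 ^ Module.finrank ℝ E * μ s * ∫⁻ p in s, H p ∂μ := by
        gcongr 1
        exact setLIntegral_mono' measurableSet_Icc fun a ha =>
          lintegral_lintegral_comp_combo_le μ hH hs hsm ha
    _ = ediam s * (2 ^ Module.finrank ℝ E * μ s * ∫⁻ p in s, H p ∂μ) := by simp

end Poincare

section Pigeonhole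

variable {ι : Type*}

lemma two_mul_card_filter_two_mul_sum_lt (s : Finset ι) (hs : s.Nonempty) (a : ι → ℝ≥0∞) :
    2 * (s.filter fun i => 2 * ∑ j ∈ s, a j < s.card * a i).card < s.card := by
  set large := s.filter fun i => 2 * ∑ j ∈ s, a j < s.card * a i
  rcases large.eq_empty_or_nonempty with hempty | hne
  · simpa [hempty] using hs
  by_contra! hcard
  have hlarge : large.card * (2 * ∑ j ∈ s, a j) < s.card * ∑ j ∈ s, a j := calc
    large.card * (2 * ∑ j ∈ s, a j) = ∑ _i ∈ large, 2 * ∑ j ∈ s, a j := by simp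
    _ < ∑ i ∈ large, s.card * a i :=
        ENNReal.sum_lt_sum_of_nonempty hne fun i hi => (Finset.mem_filter.1 hi).2
    _ = s.card * ∑ i ∈ large, a i := (Finset.mul_sum _ _ _).symm
    _ ≤ s.card * ∑ j ∈ s, a j := by gcongr; exact Finset.filter_subset _ _
  refine hlarge.not_ge ?_
  rw [← mul_assoc, mul_comm (large.card : ℝ≥0∞)]
  gcongr
  exact_mod_cast hcard

lemma exists_mem_card_mul_le_two_mul_sum {s : Finset ι} (hs : s.Nonempty) (a b : ι → ℝ≥0∞) :
    ∃ i ∈ s, s.card * a i ≤ 2 * ∑ j ∈ s, a j ∧ s.card * b i ≤ 2 * ∑ j ∈ s, b j := by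
  classical
  by_contra! hno
  have hcover : s ⊆ (s.filter fun i => 2 * ∑ j ∈ s, a j < s.card * a i) ∪
      s.filter fun i => 2 * ∑ j ∈ s, b j < s.card * b i := fun i hi => by
    have := hno i hi
    grind
  have := (Finset.card_le_card hcover).trans (Finset.card_union_le _ _)
  have := two_mul_card_filter_two_mul_sum_lt s hs a
  have := two_mul_card_filter_two_mul_sum_lt s hs b
  lia

lemma exists_mem_card_mul_measure_le {α : Type*} [MeasurableSpace α] (μ ν : Measure α)
    {s : Finset ι} (hs : s.Nonempty) {P : ι → Set α} (hP : ∀ i, MeasurableSet (P i))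
    (hd : Pairwise (Function.onFun Disjoint P)) :
    ∃ i ∈ s, s.card * μ (P i) ≤ 2 * μ univ ∧ s.card * ν (P i) ≤ 2 * ν univ := by
  have hsum : ∀ m : Measure α, ∑ i ∈ s, m (P i) ≤ m univ := fun m => by
    rw [← measure_biUnion_finset (hd.set_pairwise _) fun i _ => hP i]
    exact measure_mono (subset_univ _)
  obtain ⟨i, hi, hμ, hν⟩ :=
    exists_mem_card_mul_le_two_mul_sum hs (fun i => μ (P i)) fun i => ν (P i)
  exact ⟨i, hi, hμ.trans (by gcongr; exact hsum μ), hν.trans (by gcongr; exact hsum ν)⟩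

/- Split the range `(T, 2 T)` into `N` layers of equal height and let `N` be large. -/
lemma exists_layer_measure_le {α : Type*} [MeasurableSpace α] (μ ν : Measure α) {u : α → ℝ}
    (hu : Measurable u) {T : ℝ} (hT : 0 < T) (hμ : μ {z | T < u z} ≠ ∞) {τ : ℝ≥0∞} (hτ : τ ≠ 0) :
    ∃ t ε, T ≤ t ∧ 0 < ε ∧ t + ε ≤ 2 * T ∧ μ {z | t < u z ∧ u z < t + ε} ≤ τ ∧
      ν {z | t < u z ∧ u z < t + ε}
        ≤ ENNReal.ofReal ε * (2 / ENNReal.ofReal T * ν univ) := by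
  obtain ⟨N, hN⟩ := ENNReal.exists_nat_mul_gt hτ
    (ENNReal.mul_ne_top ENNReal.ofNat_ne_top hμ : 2 * μ {z | T < u z} ≠ ∞)
  have hN₀ : N ≠ 0 := by rintro rfl; simp at hN
  have hNpos : (0 : ℝ) < N := by positivity
  set ε := T / N with hεdef
  have hε : 0 < ε := by positivity
  set P : ℕ → Set α := fun i => {z | T + i * ε < u z ∧ u z < T + i * ε + ε}
  have hPm : ∀ i, MeasurableSet (P i) := fun i =>
    (measurableSet_lt measurable_const hu).inter (measurableSet_lt hu measurable_const)
  have hPd : Pairwise (Function.onFun Disjoint P) := (pairwise_disjoint_on P).2 fun i j hij =>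
    Set.disjoint_left.2 fun z hzi hzj => by
      have : (i : ℝ) + 1 ≤ j := by exact_mod_cast hij
      nlinarith [hzi.2, hzj.1]
  obtain ⟨i, hi, hμi, hνi⟩ := exists_mem_card_mul_measure_le (μ.restrict {z | T < u z}) ν
    (Finset.nonempty_range_iff.2 hN₀) hPm hPd
  have hTi : T ≤ T + i * ε := by nlinarith [i.cast_nonneg (α := ℝ)]
  have hsub : P i ⊆ {z | T < u z} := fun z hz => hTi.trans_lt hz.1
  rw [Measure.restrict_apply (hPm i), inter_eq_left.2 hsub, Measure.restrict_apply_univ] at hμi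
  rw [Finset.card_range] at hμi hνi
  refine ⟨T + i * ε, ε, hTi, hε, ?_, ?_, ?_⟩
  · have : (i : ℝ) + 1 ≤ N := by exact_mod_cast Finset.mem_range.1 hi
    have : N * ε = T := by rw [hεdef]; field_simp
    nlinarith
  · rw [← ENNReal.mul_le_mul_iff_right (Nat.cast_ne_zero.2 hN₀) (ENNReal.natCast_ne_top N)]
    exact hμi.trans hN.le
  · have hcancel : (N : ℝ≥0∞) * (ENNReal.ofReal ε * (2 / ENNReal.ofReal T * ν univ))
        = 2 * ν univ := by
      have hNε : (N : ℝ≥0∞) * ENNReal.ofReal ε = ENNReal.ofReal T := by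
        rw [← ENNReal.ofReal_natCast, ← ENNReal.ofReal_mul hNpos.le, mul_div_cancel₀ _ hNpos.ne']
      rw [← mul_assoc, hNε, ← mul_assoc,
        ENNReal.mul_div_cancel (ENNReal.ofReal_pos.2 hT).ne' ENNReal.ofReal_ne_top]
    rw [← ENNReal.mul_le_mul_iff_right (Nat.cast_ne_zero.2 hN₀) (ENNReal.natCast_ne_top N)]
    exact hνi.trans_eq hcancel.symm

end Pigeonhole

lemma exists_lipschitzWith_smoothTransition : ∃ K, LipschitzWith K Real.smoothTransition := by
  have hsmooth : ContDiff ℝ 1 Real.smoothTransition := Real.smoothTransition.contDiff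
  have hsupp : HasCompactSupport (deriv Real.smoothTransition) := by
    refine HasCompactSupport.intro (isCompact_Icc (a := 0) (b := 1)) fun s hs => ?_
    rw [mem_Icc, not_and_or, not_le, not_le] at hs
    rcases hs with hneg | hbig
    · refine IsLocalMin.deriv_eq_zero (Eventually.of_forall fun y => ?_)
      rw [Real.smoothTransition.zero_of_nonpos hneg.le]
      exact Real.smoothTransition.nonneg y
    · refine IsLocalMax.deriv_eq_zero (Eventually.of_forall fun y => ?_)
      rw [Real.smoothTransition.one_of_one_le hbig.le]
      exact Real.smoothTransition.le_one y
  obtain ⟨C, hC⟩ := (hsmooth.continuous_deriv le_rfl).bounded_above_of_compact_support hsupp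
  exact ⟨C.toNNReal, lipschitzWith_of_nnnorm_deriv_le (hsmooth.differentiable one_ne_zero)
    fun s => NNReal.le_toNNReal_of_coe_le (hC s)⟩

/-- The smooth radial cutoff on a normed space which vanishes for `‖u‖ ≤ t` and equals `1` for
`t + ε ≤ ‖u‖`. Composed with a function it replaces the indicator of a superlevel set. -/
noncomputable def normCutoff {F : Type*} [Norm F] (t ε : ℝ) (u : F) : ℝ :=
  Real.smoothTransition ((‖u‖ - t) / ε)

section NormCutoff

variable {F : Type*} [NormedAddCommGroup F] {t ε : ℝ} {u : F}

lemma normCutoff_eq_zero (hε : 0 ≤ ε) (hu : ‖u‖ ≤ t) : normCutoff t ε u = 0 :=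
  Real.smoothTransition.zero_of_nonpos (div_nonpos_of_nonpos_of_nonneg (by linarith) hε)

lemma normCutoff_eq_one (hε : 0 < ε) (hu : t + ε ≤ ‖u‖) : normCutoff t ε u = 1 :=
  Real.smoothTransition.one_of_one_le (by rw [le_div_iff₀ hε]; linarith)

lemma lipschitzWith_normCutoff {K : ℝ≥0} (hK : LipschitzWith K Real.smoothTransition) (t : ℝ)
    (hε : 0 ≤ ε) : LipschitzWith (K * ε.toNNReal⁻¹) (normCutoff t ε : F → ℝ) := by
  refine hK.comp (LipschitzWith.of_dist_le_mul fun x y => ?_)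
  rw [Real.dist_eq, ← sub_div, sub_sub_sub_cancel_right, abs_div, abs_of_nonneg hε, dist_eq_norm,
    NNReal.coe_inv, Real.coe_toNNReal _ hε, div_eq_inv_mul]
  gcongr
  exact abs_norm_sub_norm_le x y

variable [InnerProductSpace ℝ F]

lemma contDiff_normCutoff (ht : 0 < t) (hε : 0 ≤ ε) :
    ContDiff ℝ 1 (normCutoff t ε : F → ℝ) := by
  refine contDiff_iff_contDiffAt.2 fun u => ?_
  rcases eq_or_ne u 0 with rfl | hu
  · have hlocal : (normCutoff t ε : F → ℝ) =ᶠ[𝓝 0] fun _ => 0 := by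
      filter_upwards [ball_mem_nhds 0 ht] with y hy
      exact normCutoff_eq_zero hε (mem_ball_zero_iff.1 hy).le
    exact contDiffAt_const.congr_of_eventuallyEq hlocal
  · exact Real.smoothTransition.contDiff.contDiffAt.comp u
      (((contDiffAt_norm ℝ hu).sub contDiffAt_const).div_const ε)

lemma fderiv_normCutoff_eq_zero (hε : 0 < ε) (hu : ¬(t < ‖u‖ ∧ ‖u‖ < t + ε)) :
    fderiv ℝ (normCutoff t ε : F → ℝ) u = 0 := by
  rw [not_and_or, not_lt, not_lt] at hu
  rcases hu with hsmall | hbig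
  · refine IsLocalMin.fderiv_eq_zero (Eventually.of_forall fun y => ?_)
    rw [normCutoff_eq_zero hε.le hsmall]
    exact Real.smoothTransition.nonneg _
  · refine IsLocalMax.fderiv_eq_zero (Eventually.of_forall fun y => ?_)
    rw [normCutoff_eq_one hε hbig]
    exact Real.smoothTransition.le_one _

variable {E : Type*} [NormedAddCommGroup E] [NormedSpace ℝ E] [MeasurableSpace E] [BorelSpace E]

lemma lintegral_enorm_fderiv_normCutoff_comp_le (μ : Measure E) {K : ℝ≥0}
    (hK : LipschitzWith K Real.smoothTransition) (ht : 0 < t) (hε : 0 < ε) {v : E → F}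
    (hv : ContDiff ℝ 1 v) :
    ∫⁻ z, ‖fderiv ℝ (normCutoff t ε ∘ v) z‖ₑ ∂μ
      ≤ K / ENNReal.ofReal ε * ∫⁻ z in {z | t < ‖v z‖ ∧ ‖v z‖ < t + ε}, ‖fderiv ℝ v z‖ₑ ∂μ := by
  set layer := {z | t < ‖v z‖ ∧ ‖v z‖ < t + ε}
  have hlayer : MeasurableSet layer := ((isOpen_lt continuous_const hv.continuous.norm).inter
    (isOpen_lt hv.continuous.norm continuous_const)).measurableSet
  have hconst : ((K * ε.toNNReal⁻¹ : ℝ≥0) : ℝ≥0∞) = K / ENNReal.ofReal ε := by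
    rw [ENNReal.coe_mul, ENNReal.coe_inv (Real.toNNReal_pos.2 hε).ne', div_eq_mul_inv,
      ENNReal.ofReal]
  have hpt : ∀ z, ‖fderiv ℝ (normCutoff t ε ∘ v) z‖ₑ
      ≤ layer.indicator (fun z => K / ENNReal.ofReal ε * ‖fderiv ℝ v z‖ₑ) z := fun z => by
    rw [fderiv_comp z ((contDiff_normCutoff ht hε.le).differentiable one_ne_zero _)
      (hv.differentiable one_ne_zero z)]
    by_cases hz : z ∈ layer
    · rw [indicator_of_mem hz, ← hconst]
      refine (ContinuousLinearMap.opENorm_comp_le _ _).trans ?_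
      gcongr
      exact_mod_cast norm_fderiv_le_of_lipschitz ℝ (lipschitzWith_normCutoff hK t hε.le)
    · rw [fderiv_normCutoff_eq_zero hε hz, ContinuousLinearMap.zero_comp]
      exact (enorm_zero (E := E →L[ℝ] ℝ)).trans_le zero_le
  refine (lintegral_mono hpt).trans_eq ?_
  rw [lintegral_indicator hlayer, lintegral_const_mul _ (by
    exact (hv.continuous_fderiv one_ne_zero).enorm.measurable)]

lemma exists_cutoff_measure_layer_le (μ : Measure E) [IsFiniteMeasureOnCompacts μ] {K : ℝ≥0}
    (hK : LipschitzWith K Real.smoothTransition) {v : E → F} (hv : ContDiff ℝ 1 v)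
    (hvc : HasCompactSupport v) {T : ℝ} (hT : 0 < T) {τ : ℝ≥0∞} (hτ : τ ≠ 0) :
    ∃ w : E → ℝ, ContDiff ℝ 1 w ∧ (∀ z, w z ≠ 1 → ‖v z‖ ≤ 2 * T) ∧ (∀ z, v z = 0 → w z = 0) ∧
      μ {z | w z ≠ 0 ∧ w z ≠ 1} ≤ τ ∧
      ∫⁻ z, ‖fderiv ℝ w z‖ₑ ∂μ ≤ 2 * K / ENNReal.ofReal T * ∫⁻ z, ‖fderiv ℝ v z‖ₑ ∂μ := by
  have hfin : μ {z | T < ‖v z‖} ≠ ∞ := measure_ne_top_of_subset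
    (fun z hz => subset_tsupport v (norm_pos_iff.1 (hT.trans hz))) hvc.isCompact.measure_lt_top.ne
  obtain ⟨t, ε, htT, hε, htop, hvol, hgrad⟩ := exists_layer_measure_le μ
    (μ.withDensity fun z => ‖fderiv ℝ v z‖ₑ) hv.continuous.norm.measurable hT hfin hτ
  have ht : 0 < t := hT.trans_le htT
  refine ⟨normCutoff t ε ∘ v, (contDiff_normCutoff ht hε.le).comp hv, fun z hz => ?_,
    fun z hz => normCutoff_eq_zero hε.le (by simpa [hz] using ht.le), ?_, ?_⟩
  · by_contra! hlt
    exact hz (normCutoff_eq_one hε (htop.trans hlt.le))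
  · refine (measure_mono fun z hz => ?_).trans hvol
    exact ⟨not_le.1 fun h => hz.1 (normCutoff_eq_zero hε.le h),
      not_le.1 fun h => hz.2 (normCutoff_eq_one hε h)⟩
  · have hlayer : MeasurableSet {z | t < ‖v z‖ ∧ ‖v z‖ < t + ε} :=
      ((isOpen_lt continuous_const hv.continuous.norm).inter
        (isOpen_lt hv.continuous.norm continuous_const)).measurableSet
    rw [withDensity_apply _ hlayer, withDensity_apply _ MeasurableSet.univ,
      Measure.restrict_univ] at hgrad
    calc _ ≤ K / ENNReal.ofReal ε *
            ∫⁻ z in {z | t < ‖v z‖ ∧ ‖v z‖ < t + ε}, ‖fderiv ℝ v z‖ₑ ∂μ :=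
          lintegral_enorm_fderiv_normCutoff_comp_le μ hK ht hε hv
      _ ≤ K / ENNReal.ofReal ε *
            (ENNReal.ofReal ε * (2 / ENNReal.ofReal T * ∫⁻ z, ‖fderiv ℝ v z‖ₑ ∂μ)) := by
          gcongr
      _ = 2 * K / ENNReal.ofReal T * ∫⁻ z, ‖fderiv ℝ v z‖ₑ ∂μ := by
          rw [← mul_assoc, ENNReal.div_mul_cancel (ENNReal.ofReal_pos.2 hε).ne'
            ENNReal.ofReal_ne_top, ← mul_assoc, ← mul_div_assoc, mul_comm (K : ℝ≥0∞)]

end NormCutoff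

section LocalMaximal

/-- The restricted centred Hardy–Littlewood maximal function of `u : X → ℝ≥0∞`: the supremum of
the averages of `u` over the balls centred at `x` of radius at most `ρ`. -/
noncomputable def localMaximal {X : Type*} [PseudoMetricSpace X] [MeasurableSpace X]
    (μ : Measure X) (u : X → ℝ≥0∞) (ρ : ℝ) (x : X) : ℝ≥0∞ :=
  ⨆ r ∈ Ioc 0 ρ, ⨍⁻ y in ball x r, u y ∂μ

variable {X : Type*} [PseudoMetricSpace X] [MeasurableSpace X] (μ : Measure X)
  {u u' : X → ℝ≥0∞} {ρ ρ' r : ℝ} {x : X}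

lemma lowerSemicontinuous_measure_ball (r : ℝ) : LowerSemicontinuous fun x => μ (ball x r) := by
  intro x c (hc : c < μ (ball x r))
  obtain ⟨k, hk⟩ : ∃ k : ℕ, c < μ (ball x (r - 1 / (k + 1))) := by
    have hmono : Monotone fun k : ℕ => ball x (r - 1 / ((k : ℝ) + 1)) := fun k l hkl =>
      ball_subset_ball (sub_le_sub_left (Nat.one_div_le_one_div hkl) r)
    have hunion : ball x r = ⋃ k : ℕ, ball x (r - 1 / ((k : ℝ) + 1)) := by
      refine Subset.antisymm (fun y hy => ?_) (iUnion_subset fun k => ball_subset_ball ?_)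
      · obtain ⟨k, hk⟩ := exists_nat_one_div_lt (sub_pos.2 (mem_ball.1 hy))
        exact mem_iUnion.2 ⟨k, mem_ball.2 (by linarith)⟩
      · exact sub_le_self r Nat.one_div_pos_of_nat.le
    rwa [hunion, hmono.measure_iUnion, lt_iSup_iff] at hc
  filter_upwards [ball_mem_nhds x (Nat.one_div_pos_of_nat (n := k))] with y hy
  refine hk.trans_le (measure_mono (ball_subset_ball' ?_))
  linarith [mem_ball'.1 hy]

variable {μ}

lemma setLAverage_le_localMaximal (hr : r ∈ Ioc 0 ρ) :
    ⨍⁻ y in ball x r, u y ∂μ ≤ localMaximal μ u ρ x :=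
  le_iSup₂_of_le r hr le_rfl

lemma localMaximal_mono_radius (h : ρ ≤ ρ') : localMaximal μ u ρ x ≤ localMaximal μ u ρ' x :=
  biSup_mono fun _ hr => Ioc_subset_Ioc_right h hr

lemma localMaximal_mono_of_subset [OpensMeasurableSpace X] {s : Set X} (hs : ball x ρ ⊆ s)
    (h : ∀ y ∈ s, u y ≤ u' y) : localMaximal μ u ρ x ≤ localMaximal μ u' ρ x := by
  refine iSup₂_mono fun r hr => ?_
  rw [setLAverage_eq, setLAverage_eq]
  gcongr 1
  exact setLIntegral_mono' measurableSet_ball fun y hy => h y (hs (ball_subset_ball hr.2 hy))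

lemma localMaximal_finsetSum_le {ι : Type*} {u : ι → X → ℝ≥0∞} (s : Finset ι)
    (hu : ∀ i ∈ s, AEMeasurable (u i) μ) :
    localMaximal μ (fun y => ∑ i ∈ s, u i y) ρ x ≤ ∑ i ∈ s, localMaximal μ (u i) ρ x := by
  refine iSup₂_le fun r hr => ?_
  rw [setLAverage_eq, lintegral_finsetSum' _ fun i hi => (hu i hi).restrict, div_eq_mul_inv,
    Finset.sum_mul]
  refine Finset.sum_le_sum fun i _ => ?_
  rw [← div_eq_mul_inv, ← setLAverage_eq]
  exact setLAverage_le_localMaximal hr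

lemma lintegral_ball_le_localMaximal_mul [μ.IsOpenPosMeasure] (hr : r ∈ Ioc 0 ρ)
    (hfin : μ (ball x r) ≠ ∞) :
    ∫⁻ y in ball x r, u y ∂μ ≤ localMaximal μ u ρ x * μ (ball x r) := by
  rw [← ENNReal.div_le_iff (measure_ball_pos μ x hr.1).ne' hfin, ← setLAverage_eq]
  exact setLAverage_le_localMaximal hr

end LocalMaximal

lemma lowerSemicontinuous_localMaximal {E : Type*} [NormedAddCommGroup E] [MeasurableSpace E]
    [BorelSpace E] (μ : Measure E) [μ.IsAddHaarMeasure] (u : E → ℝ≥0∞) (ρ : ℝ) :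
    LowerSemicontinuous (localMaximal μ u ρ) := by
  refine lowerSemicontinuous_biSup fun r hr => ?_
  have haverage : (fun x => ⨍⁻ y in ball x r, u y ∂μ)
      = fun x => μ.withDensity u (ball x r) / μ (ball 0 r) := funext fun x => by
    rw [setLAverage_eq, withDensity_apply _ measurableSet_ball, Measure.addHaar_ball_center]
  rw [haverage]
  exact (ENNReal.continuous_div_const _ (measure_ball_pos μ 0 hr.1).ne').comp_lowerSemicontinuous
    (lowerSemicontinuous_measure_ball _ r) fun a b hab => ENNReal.div_le_div_right hab _

section HausdorffContent

/-- The `d`-dimensional Hausdorff content (without restriction on the diameter of the covering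
sets). It is easier to bound than `μH[d]`, and for `0 ≤ d` its null sets are `μH[d]`-null. -/
noncomputable def hausdorffContent (X : Type*) [PseudoEMetricSpace X] (d : ℝ) : OuterMeasure X :=
  OuterMeasure.boundedBy fun s => ediam s ^ d

lemma hausdorffMeasure_eq_zero_of_hausdorffContent_eq_zero {X : Type*} [EMetricSpace X]
    [MeasurableSpace X] [BorelSpace X] {d : ℝ} (hd : 0 ≤ d) {s : Set X}
    (hs : hausdorffContent X d s = 0) : μH[d] s = 0 := by
  rw [Measure.hausdorffMeasure_apply, ← nonpos_iff_eq_zero]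
  refine iSup₂_le fun r hr => le_of_forall_gt fun c hc => ?_
  have hrd : 0 < r ^ d := ENNReal.rpow_pos_of_nonneg hr hd
  have hlt : hausdorffContent X d s < min c (r ^ d) := hs.trans_lt (lt_min hc hrd)
  simp only [hausdorffContent, OuterMeasure.boundedBy_apply, iInf_lt_iff] at hlt
  obtain ⟨t, hst, hsum⟩ := hlt
  have hdiam : ∀ k, ediam (t k) ≤ r := fun k => by
    rcases (t k).eq_empty_or_nonempty with hempty | hne
    · simp [hempty]
    · by_contra! hlarge
      refine (hsum.trans_le (min_le_right _ _)).not_ge ?_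
      calc r ^ d ≤ ediam (t k) ^ d := ENNReal.rpow_le_rpow hlarge.le hd
        _ ≤ ⨆ _ : (t k).Nonempty, ediam (t k) ^ d := le_iSup_of_le hne le_rfl
        _ ≤ ∑' k, ⨆ _ : (t k).Nonempty, ediam (t k) ^ d := ENNReal.le_tsum k
  exact (iInf_le_of_le t (iInf₂_le hst hdiam)).trans_lt
    (hsum.trans_le (min_le_left _ _))

lemma hausdorffContent_le_of_forall_rpow_le_measure_ball {X : Type*} [MetricSpace X]
    [SecondCountableTopology X] [MeasurableSpace X] [OpensMeasurableSpace X] {d : ℝ} (hd : 0 ≤ d)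
    {s : Set X} (ν : Measure X) (K : ℝ≥0∞) (R : ℝ)
    (h : ∀ x ∈ s, ∃ r, 0 < r ∧ r ≤ R ∧ ENNReal.ofReal r ^ d ≤ K * ν (ball x r)) :
    hausdorffContent X d s ≤ 10 ^ d * K * ν univ := by
  choose! r hr₀ hrR hr using h
  obtain ⟨t, hts, hdisj, hcov⟩ := Vitali.exists_disjoint_subfamily_covering_enlargement_closedBall
    s id r R hrR 5 (by norm_num)
  have htc : Countable t := (hdisj.countable_of_nonempty_interior fun a ha =>
    ⟨a, ball_subset_interior_closedBall (mem_ball_self (hr₀ a (hts ha)))⟩).to_subtype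
  have hcover : s ⊆ ⋃ b : t, closedBall b.1 (5 * r b) := fun x hx => by
    obtain ⟨b, hb, hxb⟩ := hcov x hx
    exact mem_iUnion.2 ⟨⟨b, hb⟩, hxb (mem_closedBall_self (hr₀ x hx).le)⟩
  have hball : ∀ b : t, hausdorffContent X d (closedBall b.1 (5 * r b))
      ≤ 10 ^ d * K * ν (ball b.1 (r b)) := fun b => by
    have hdiam : ediam (closedBall b.1 (5 * r b)) ≤ 10 * ENNReal.ofReal (r b) := by
      rw [← closedEBall_ofReal (mul_nonneg (by norm_num) (hr₀ b (hts b.2)).le)]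
      refine ediam_closedEBall_le.trans_eq ?_
      rw [ENNReal.ofReal_mul (by norm_num), ← mul_assoc, ENNReal.ofReal_ofNat]
      norm_num
    calc hausdorffContent X d (closedBall b.1 (5 * r b))
        ≤ ediam (closedBall b.1 (5 * r b)) ^ d := OuterMeasure.boundedBy_le _
      _ ≤ (10 * ENNReal.ofReal (r b)) ^ d := by gcongr
      _ = 10 ^ d * ENNReal.ofReal (r b) ^ d := ENNReal.mul_rpow_of_nonneg _ _ hd
      _ ≤ 10 ^ d * K * ν (ball b.1 (r b)) := by
          rw [mul_assoc]
          gcongr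
          exact hr b (hts b.2)
  have hdisj' : Pairwise (Function.onFun Disjoint fun b : t => ball b.1 (r b)) := fun a b hab =>
    (hdisj a.2 b.2 (Subtype.coe_ne_coe.2 hab)).mono ball_subset_closedBall ball_subset_closedBall
  calc hausdorffContent X d s ≤ ∑' b : t, hausdorffContent X d (closedBall b.1 (5 * r b)) :=
        (measure_mono hcover).trans (measure_iUnion_le _)
    _ ≤ ∑' b : t, 10 ^ d * K * ν (ball b.1 (r b)) := ENNReal.tsum_le_tsum hball
    _ = 10 ^ d * K * ν (⋃ b : t, ball b.1 (r b)) := by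
        rw [ENNReal.tsum_mul_left, measure_iUnion hdisj' fun _ => measurableSet_ball]
    _ ≤ 10 ^ d * K * ν univ := by gcongr; exact subset_univ _

end HausdorffContent

section Boxing

variable {E F : Type*} [NormedAddCommGroup E] [NormedSpace ℝ E] [FiniteDimensional ℝ E]
  [MeasurableSpace E] [BorelSpace E] [NormedAddCommGroup F] (μ : Measure E)

lemma mul_ofReal_rpow_le_lintegral_fderiv [NormedSpace ℝ F] [CompleteSpace F]
    [μ.IsAddHaarMeasure] {u : E → F} (hu : ContDiff ℝ 1 u) {x : E} {r : ℝ} (hr : 0 < r) {κ : ℝ≥0∞}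
    (h : κ * (μ (ball x r) * μ (ball x r))
      ≤ ∫⁻ y in ball x r, ∫⁻ z in ball x r, ‖u y - u z‖ₑ ∂μ ∂μ) :
    κ * (μ (ball 0 1) * ENNReal.ofReal r ^ ((Module.finrank ℝ E : ℝ) - 1))
      ≤ 2 ^ (Module.finrank ℝ E + 1) * ∫⁻ p in ball x r, ‖fderiv ℝ u p‖ₑ ∂μ := by
  set d := Module.finrank ℝ E
  set I := ∫⁻ p in ball x r, ‖fderiv ℝ u p‖ₑ ∂μ
  set ϱ := ENNReal.ofReal r
  have hϱ₀ : ϱ ≠ 0 := (ENNReal.ofReal_pos.2 hr).ne'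
  have hϱ : ϱ ≠ ∞ := ENNReal.ofReal_ne_top
  have hdiam : ediam (ball x r) ≤ 2 * ϱ := by
    rw [← eball_ofReal]
    exact ediam_eball_le
  have hball : μ (ball x r) = ϱ * (μ (ball 0 1) * ϱ ^ ((d : ℝ) - 1)) := by
    rw [Measure.addHaar_ball_of_pos _ _ hr, ENNReal.ofReal_pow hr.le, ENNReal.rpow_sub _ _ hϱ₀ hϱ,
      ENNReal.rpow_natCast, ENNReal.rpow_one, mul_left_comm, ENNReal.mul_div_cancel hϱ₀ hϱ,
      mul_comm]
  have hpoincare : μ (ball x r) * (κ * μ (ball x r)) ≤ μ (ball x r) * (2 * ϱ * 2 ^ d * I) := calc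
    μ (ball x r) * (κ * μ (ball x r)) = κ * (μ (ball x r) * μ (ball x r)) := by ring
    _ ≤ ediam (ball x r) * (2 ^ d * μ (ball x r) * I) :=
        h.trans (lintegral_lintegral_enorm_sub_le_fderiv μ hu (convex_ball x r) measurableSet_ball
          isBounded_ball)
    _ ≤ 2 * ϱ * (2 ^ d * μ (ball x r) * I) := by gcongr
    _ = μ (ball x r) * (2 * ϱ * 2 ^ d * I) := by ring
  rw [ENNReal.mul_le_mul_iff_right (measure_ball_pos μ x hr).ne' measure_ball_lt_top.ne, hball]
    at hpoincare
  rw [← ENNReal.mul_le_mul_iff_right hϱ₀ hϱ]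
  calc ϱ * (κ * (μ (ball 0 1) * ϱ ^ ((d : ℝ) - 1)))
      = κ * (ϱ * (μ (ball 0 1) * ϱ ^ ((d : ℝ) - 1))) := by ring
    _ ≤ 2 * ϱ * 2 ^ d * I := hpoincare
    _ = ϱ * (2 ^ (d + 1) * I) := by ring

end Boxing

section DoubleIntegral

variable {α F : Type*} [MeasurableSpace α] [NormedAddCommGroup F] (μ : Measure α) {B : Set α}

lemma ofReal_mul_sq_measure_le_lintegral_lintegral_enorm_sub {v : α → F} {D : Set α} {T : ℝ}
    (hT : 0 ≤ T) (hD : MeasurableSet D) (hDB : D ⊆ B) (hB : μ B ≠ ∞) (hhalf : μ B ≤ 2 * μ D)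
    (hvD : ∀ z ∈ D, ‖v z‖ ≤ 2 * T)
    (hav : ENNReal.ofReal (4 * T) * μ B ≤ ∫⁻ y in B, ‖v y‖ₑ ∂μ) :
    ENNReal.ofReal T * (μ B * μ B) ≤ ∫⁻ y in B, ∫⁻ z in B, ‖v y - v z‖ₑ ∂μ ∂μ := by
  have hinner : ∀ y, (‖v y‖ₑ - ENNReal.ofReal (2 * T)) * μ D ≤ ∫⁻ z in B, ‖v y - v z‖ₑ ∂μ :=
    fun y => calc
      (‖v y‖ₑ - ENNReal.ofReal (2 * T)) * μ D
        = ∫⁻ _ in D, (‖v y‖ₑ - ENNReal.ofReal (2 * T)) ∂μ := (setLIntegral_const _ _).symm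
      _ ≤ ∫⁻ z in D, ‖v y - v z‖ₑ ∂μ := setLIntegral_mono' hD fun z hz => by
          have hvz : ‖v z‖ₑ ≤ ENNReal.ofReal (2 * T) := by
            rw [← ofReal_norm]
            exact ENNReal.ofReal_le_ofReal (hvD z hz)
          calc ‖v y‖ₑ - ENNReal.ofReal (2 * T) ≤ ‖v y‖ₑ - ‖v z‖ₑ := by gcongr
            _ ≤ ‖v y - v z‖ₑ := tsub_le_iff_right.2 <| by
              simpa using enorm_add_le (v y - v z) (v z)
      _ ≤ ∫⁻ z in B, ‖v y - v z‖ₑ ∂μ := lintegral_mono_set hDB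
  have hexcess : ENNReal.ofReal (2 * T) * μ B
      ≤ ∫⁻ y in B, (‖v y‖ₑ - ENNReal.ofReal (2 * T)) ∂μ := calc
    ENNReal.ofReal (2 * T) * μ B
      = ENNReal.ofReal (4 * T) * μ B - ENNReal.ofReal (2 * T) * μ B := by
        rw [show 4 * T = 2 * T + 2 * T by ring, ENNReal.ofReal_add (by positivity) (by positivity),
          add_mul, ENNReal.add_sub_cancel_right (ENNReal.mul_ne_top ENNReal.ofReal_ne_top hB)]
    _ ≤ (∫⁻ y in B, ‖v y‖ₑ ∂μ) - ∫⁻ _ in B, ENNReal.ofReal (2 * T) ∂μ := by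
        rw [setLIntegral_const]
        exact tsub_le_tsub_right hav _
    _ ≤ _ := lintegral_sub_le _ _ measurable_const
  calc ENNReal.ofReal T * (μ B * μ B) ≤ ENNReal.ofReal T * (μ B * (2 * μ D)) := by gcongr
    _ = ENNReal.ofReal (2 * T) * μ B * μ D := by
        rw [ENNReal.ofReal_mul two_pos.le, ENNReal.ofReal_ofNat]
        ring
    _ ≤ (∫⁻ y in B, (‖v y‖ₑ - ENNReal.ofReal (2 * T)) ∂μ) * μ D := by gcongr
    _ = ∫⁻ y in B, (‖v y‖ₑ - ENNReal.ofReal (2 * T)) * μ D ∂μ :=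
        (lintegral_mul_const' _ _ (measure_ne_top_of_subset hDB hB)).symm
    _ ≤ ∫⁻ y in B, ∫⁻ z in B, ‖v y - v z‖ₑ ∂μ ∂μ := lintegral_mono hinner

lemma measure_mul_measure_le_lintegral_lintegral_enorm_sub {w : α → ℝ} {A₀ A₁ : Set α}
    (hA₀ : MeasurableSet A₀) (hA₁ : MeasurableSet A₁) (hA₀B : A₀ ⊆ B) (hA₁B : A₁ ⊆ B)
    (hw₀ : ∀ z ∈ A₀, w z = 0) (hw₁ : ∀ z ∈ A₁, w z = 1) :
    μ A₁ * μ A₀ ≤ ∫⁻ y in B, ∫⁻ z in B, ‖w y - w z‖ₑ ∂μ ∂μ := calc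
  μ A₁ * μ A₀ = ∫⁻ _ in A₁, ∫⁻ _ in A₀, 1 ∂μ ∂μ := by simp [mul_comm]
  _ ≤ ∫⁻ y in A₁, ∫⁻ z in B, ‖w y - w z‖ₑ ∂μ ∂μ := by
      refine setLIntegral_mono' hA₁ fun y hy => le_trans ?_ (lintegral_mono_set hA₀B)
      refine setLIntegral_mono' hA₀ fun z hz => ?_
      simp [hw₁ y hy, hw₀ z hz]
  _ ≤ _ := lintegral_mono_set hA₁B

end DoubleIntegral

section Density

lemma withDensity_add_univ_le {α : Type*} [MeasurableSpace α] (μ : Measure α) {a b : α → ℝ≥0∞}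
    (ha : Measurable a) {c K : ℝ≥0∞} (hc : c ≠ ∞) (hab : ∫⁻ z, a z ∂μ ≤ K * c * ∫⁻ z, b z ∂μ) :
    μ.withDensity (fun z => a z + c * b z) univ ≤ (K + 1) * (c * ∫⁻ z, b z ∂μ) := by
  rw [withDensity_apply _ MeasurableSet.univ, Measure.restrict_univ, lintegral_add_left ha,
    lintegral_const_mul' _ _ hc, add_mul, one_mul, ← mul_assoc]
  gcongr

lemma exists_pos_le_one_dist_lt {X F : Type*} [PseudoMetricSpace X] [NormedAddCommGroup F]
    {v : X → F} (hvc : HasCompactSupport v) (hv : Continuous v) {T : ℝ} (hT : 0 < T) :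
    ∃ δ > 0, δ ≤ 1 ∧ ∀ y z, dist y z < 2 * δ → dist (v y) (v z) < T := by
  obtain ⟨δ, hδ, huc⟩ :=
    Metric.uniformContinuous_iff.1 (hvc.uniformContinuous_of_continuous hv) T hT
  exact ⟨min 1 (δ / 2), by positivity, min_le_left _ _, fun y z hyz =>
    huc (hyz.trans_le (by linarith [min_le_right 1 (δ / 2)]))⟩

lemma measure_le_four_mul_measure_zero_inter {α : Type*} [MeasurableSpace α] {μ : Measure α}
    {w : α → ℝ} {B : Set α} (hB : μ B ≠ ∞) (hsparse : 2 * μ ({z | w z = 1} ∩ B) ≤ μ B)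
    (hlayer : 4 * μ {z | w z ≠ 0 ∧ w z ≠ 1} ≤ μ B) :
    μ B ≤ 4 * μ ({z | w z = 0} ∩ B) := by
  have hcover : B ⊆ ({z | w z = 1} ∩ B ∪ {z | w z = 0} ∩ B) ∪
      {z | w z ≠ 0 ∧ w z ≠ 1} := fun z hz => by
    by_cases h₁ : w z = 1 <;> by_cases h₀ : w z = 0 <;> simp_all
  have hsum := (measure_mono hcover).trans ((measure_union_le _ _).trans
    (add_le_add_left (measure_union_le _ _) (μ {z | w z ≠ 0 ∧ w z ≠ 1})))
  refine ENNReal.le_of_add_le_add_left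
    (ENNReal.mul_ne_top ENNReal.ofNat_ne_top hB : 3 * μ B ≠ ∞) ?_
  calc 3 * μ B + μ B = 4 * μ B := by ring
    _ ≤ 4 * (μ ({z | w z = 1} ∩ B) + μ ({z | w z = 0} ∩ B) + μ {z | w z ≠ 0 ∧ w z ≠ 1}) := by
        gcongr
    _ = 2 * (2 * μ ({z | w z = 1} ∩ B)) + 4 * μ {z | w z ≠ 0 ∧ w z ≠ 1}
          + 4 * μ ({z | w z = 0} ∩ B) := by ring
    _ ≤ 2 * μ B + μ B + 4 * μ ({z | w z = 0} ∩ B) := by gcongr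
    _ = 3 * μ B + 4 * μ ({z | w z = 0} ∩ B) := by ring

variable {X F : Type*} [PseudoMetricSpace X] [MeasurableSpace X] [OpensMeasurableSpace X]
  [NormedAddCommGroup F] (μ : Measure X)

lemma ofReal_mul_measure_ball_le_of_uniform {v : X → F} {T δ : ℝ}
    (huc : ∀ y z, dist y z < 2 * δ → dist (v y) (v z) < T) {x : X} {r : ℝ} (hrδ : r ≤ δ)
    (h : ENNReal.ofReal (5 * T) * μ (ball x r) < ∫⁻ y in ball x r, ‖v y‖ₑ ∂μ) :
    ENNReal.ofReal (4 * T) * μ (ball x δ) ≤ ∫⁻ y in ball x δ, ‖v y‖ₑ ∂μ := by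
  obtain ⟨y, hy, hvy⟩ : ∃ y ∈ ball x r, 5 * T < ‖v y‖ := by
    by_contra! hsmall
    refine h.not_ge ?_
    rw [← setLIntegral_const]
    refine setLIntegral_mono' measurableSet_ball fun y hy => ?_
    rw [← ofReal_norm]
    exact ENNReal.ofReal_le_ofReal (hsmall y hy)
  rw [← setLIntegral_const]
  refine setLIntegral_mono' measurableSet_ball fun z hz => ?_
  rw [← ofReal_norm]
  refine ENNReal.ofReal_le_ofReal ?_
  have hyz : dist y z < 2 * δ := by
    linarith [dist_triangle_right y z x, mem_ball.1 hy, mem_ball.1 hz]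
  have hv := huc y z hyz
  rw [dist_eq_norm] at hv
  linarith [norm_sub_norm_le (v y) (v z)]

lemma exists_radius_ge_of_lt_localMaximal [ProperSpace X] [μ.IsOpenPosMeasure]
    [IsFiniteMeasureOnCompacts μ] {v : X → F} {T δ : ℝ} (hδ₁ : δ ≤ 1) (hT : 0 < T)
    (huc : ∀ y z, dist y z < 2 * δ → dist (v y) (v z) < T) {x : X}
    (hx : ENNReal.ofReal (5 * T) < localMaximal μ (fun y => ‖v y‖ₑ) 1 x) :
    ∃ ρ ∈ Icc δ 1, ENNReal.ofReal (4 * T) * μ (ball x ρ) ≤ ∫⁻ y in ball x ρ, ‖v y‖ₑ ∂μ := by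
  simp only [localMaximal, lt_iSup_iff] at hx
  obtain ⟨r, hr, hlt⟩ := hx
  rw [setLAverage_eq, ENNReal.lt_div_iff_mul_lt (Or.inl (measure_ball_pos μ x hr.1).ne')
    (Or.inl measure_ball_lt_top.ne)] at hlt
  rcases le_total δ r with hδr | hrδ
  · refine ⟨r, ⟨hδr, hr.2⟩, le_trans ?_ hlt.le⟩
    gcongr
    norm_num
  · exact ⟨δ, ⟨le_rfl, hδ₁⟩, ofReal_mul_measure_ball_le_of_uniform μ huc hrδ hlt⟩

end Density

section Boxing

variable {E F : Type*} [NormedAddCommGroup E] [NormedSpace ℝ E] [FiniteDimensional ℝ E]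
  [MeasurableSpace E] [BorelSpace E] [NormedAddCommGroup F] (μ : Measure E) [μ.IsAddHaarMeasure]

lemma exists_forall_le_of_measure_ball_le [Nontrivial E] {V : ℝ≥0∞} (hV : V ≠ ∞) :
    ∃ R, ∀ (x : E) s, μ (ball x s) ≤ V → s ≤ R := by
  set ω := μ (ball (0 : E) 1)
  have hω₀ : ω ≠ 0 := (measure_ball_pos μ 0 one_pos).ne'
  refine ⟨max 1 (V / ω).toReal, fun x s hs => ?_⟩
  by_contra! hlarge
  have hs₁ : 1 < s := (le_max_left _ _).trans_lt hlarge
  rw [Measure.addHaar_ball_of_pos _ _ (one_pos.trans hs₁),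
    ← ENNReal.le_div_iff_mul_le (Or.inl hω₀) (Or.inl measure_ball_lt_top.ne),
    ENNReal.ofReal_le_iff_le_toReal (ENNReal.div_ne_top hV hω₀)] at hs
  have : s ≤ s ^ Module.finrank ℝ E := le_self_pow₀ hs₁.le Module.finrank_pos.ne'
  linarith [le_max_right 1 (V / ω).toReal]

lemma exists_radius_half_density [Nontrivial E] {A : Set E} (hA : μ A ≠ ∞) {x : E} {ρ : ℝ}
    (hρ : 0 < ρ) (hdense : μ (ball x ρ) ≤ 2 * μ (A ∩ ball x ρ)) :
    ∃ s ≥ ρ, μ (ball x s) ≤ 2 * μ (A ∩ ball x s) ∧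
      2 * μ (A ∩ ball x (2 * s)) ≤ μ (ball x (2 * s)) := by
  by_contra! hno
  have hall : ∀ k : ℕ, μ (ball x (2 ^ k * ρ)) ≤ 2 * μ (A ∩ ball x (2 ^ k * ρ)) := fun k => by
    induction k with
    | zero => simpa using hdense
    | succ k ih =>
      rw [pow_succ', mul_assoc]
      exact (hno _ (le_mul_of_one_le_left hρ.le (one_le_pow₀ one_le_two)) ih).le
  obtain ⟨R, hR⟩ := exists_forall_le_of_measure_ball_le μ
    (ENNReal.mul_ne_top ENNReal.ofNat_ne_top hA : 2 * μ A ≠ ∞)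
  obtain ⟨k, hk⟩ := pow_unbounded_of_one_lt (R / ρ) (one_lt_two (α := ℝ))
  refine ((div_lt_iff₀ hρ).1 hk).not_ge (hR x _ ((hall k).trans ?_))
  gcongr
  exact inter_subset_left

lemma exists_radius_rpow_le_of_dense [Nontrivial E] {w : E → ℝ} (hw : ContDiff ℝ 1 w)
    (hfin : μ {z | w z = 1} ≠ ∞) {x : E} {ρ : ℝ} (hρ : 0 < ρ)
    (hlayer : 4 * μ {z | w z ≠ 0 ∧ w z ≠ 1} ≤ μ (ball x ρ))
    (hdense : μ (ball x ρ) ≤ 2 * μ ({z | w z = 1} ∩ ball x ρ)) :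
    ∃ s > 0, μ (ball x s) ≤ 2 * μ {z | w z = 1} ∧
      μ (ball 0 1) * ENNReal.ofReal (2 * s) ^ ((Module.finrank ℝ E : ℝ) - 1)
        ≤ 2 ^ (2 * Module.finrank ℝ E + 4) * ∫⁻ p in ball x (2 * s), ‖fderiv ℝ w p‖ₑ ∂μ := by
  set d := Module.finrank ℝ E
  obtain ⟨s, hρs, hdense_s, hsparse⟩ := exists_radius_half_density μ hfin hρ hdense
  have hs : 0 < s := hρ.trans_le hρs
  refine ⟨s, hs, hdense_s.trans (by gcongr; exact inter_subset_left), ?_⟩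
  set B := ball x (2 * s)
  have hsB : ball x s ⊆ B := ball_subset_ball (by linarith)
  have hone : μ B ≤ 2 ^ (d + 1) * μ ({z | w z = 1} ∩ B) := calc
    μ B = 2 ^ d * μ (ball x s) := by
        rw [Measure.addHaar_ball_mul_of_pos _ _ two_pos, ENNReal.ofReal_pow two_pos.le,
          ENNReal.ofReal_ofNat, Measure.addHaar_ball_center μ x]
    _ ≤ 2 ^ d * (2 * μ ({z | w z = 1} ∩ B)) := by
        gcongr 1
        exact hdense_s.trans (by gcongr)
    _ = 2 ^ (d + 1) * μ ({z | w z = 1} ∩ B) := by ring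
  have hzero : μ B ≤ 4 * μ ({z | w z = 0} ∩ B) := measure_le_four_mul_measure_zero_inter
    measure_ball_lt_top.ne hsparse (hlayer.trans (measure_mono (ball_subset_ball (by linarith))))
  have hlevel : ∀ c, MeasurableSet ({z | w z = c} ∩ B) := fun c =>
    (isClosed_eq hw.continuous continuous_const).measurableSet.inter measurableSet_ball
  have hosc : (2 ^ (d + 3))⁻¹ * (μ B * μ B) ≤ ∫⁻ y in B, ∫⁻ z in B, ‖w y - w z‖ₑ ∂μ ∂μ := by
    rw [ENNReal.inv_mul_le_iff (by positivity) (by simp)]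
    calc μ B * μ B ≤ 2 ^ (d + 1) * μ ({z | w z = 1} ∩ B) * (4 * μ ({z | w z = 0} ∩ B)) := by gcongr
      _ = 2 ^ (d + 3) * (μ ({z | w z = 1} ∩ B) * μ ({z | w z = 0} ∩ B)) := by ring
      _ ≤ _ := by
        gcongr
        exact measure_mul_measure_le_lintegral_lintegral_enorm_sub μ (hlevel 0) (hlevel 1)
          inter_subset_right inter_subset_right (fun z hz => hz.1) fun z hz => hz.1
  have hgain := mul_ofReal_rpow_le_lintegral_fderiv μ hw (by positivity) hosc
  rw [ENNReal.inv_mul_le_iff (by positivity) (by simp), ← mul_assoc, ← pow_add] at hgain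
  rwa [show 2 * d + 4 = d + 3 + (d + 1) by ring]

lemma rpow_le_of_sparse [NormedSpace ℝ F] [CompleteSpace F] {v : E → F} (hv : ContDiff ℝ 1 v)
    {T : ℝ} (hT : 0 < T) {A : Set E} (hA : MeasurableSet A) (hvA : ∀ z ∉ A, ‖v z‖ ≤ 2 * T) {x : E}
    {ρ : ℝ} (hρ : 0 < ρ) (hav : ENNReal.ofReal (4 * T) * μ (ball x ρ) ≤ ∫⁻ y in ball x ρ, ‖v y‖ₑ ∂μ)
    (hsparse : 2 * μ (A ∩ ball x ρ) ≤ μ (ball x ρ)) :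
    μ (ball 0 1) * ENNReal.ofReal ρ ^ ((Module.finrank ℝ E : ℝ) - 1)
      ≤ 2 ^ (Module.finrank ℝ E + 1) *
        ((ENNReal.ofReal T)⁻¹ * ∫⁻ p in ball x ρ, ‖fderiv ℝ v p‖ₑ ∂μ) := by
  have hhalf : μ (ball x ρ) ≤ 2 * μ (ball x ρ \ A) := by
    refine ENNReal.le_of_add_le_add_left (a := μ (ball x ρ)) measure_ball_lt_top.ne ?_
    calc μ (ball x ρ) + μ (ball x ρ) = 2 * (μ (A ∩ ball x ρ) + μ (ball x ρ \ A)) := by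
          rw [inter_comm, measure_inter_add_sdiff _ hA, two_mul]
      _ = 2 * μ (A ∩ ball x ρ) + 2 * μ (ball x ρ \ A) := mul_add _ _ _
      _ ≤ μ (ball x ρ) + 2 * μ (ball x ρ \ A) := by gcongr
  have hgain := mul_ofReal_rpow_le_lintegral_fderiv μ hv hρ
    (ofReal_mul_sq_measure_le_lintegral_lintegral_enorm_sub μ hT.le (measurableSet_ball.diff hA)
      sdiff_subset measure_ball_lt_top.ne hhalf (fun z hz => hvA z hz.2) hav)
  rwa [ENNReal.mul_le_iff_le_inv (ENNReal.ofReal_pos.2 hT).ne' ENNReal.ofReal_ne_top,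
    mul_left_comm] at hgain

lemma exists_radius_rpow_le_withDensity [Nontrivial E] [NormedSpace ℝ F] [CompleteSpace F]
    {v : E → F} {w : E → ℝ} (hv : ContDiff ℝ 1 v) (hw : ContDiff ℝ 1 w)
    (hfin : μ {z | w z = 1} ≠ ∞) {T : ℝ} (hT : 0 < T) (hvw : ∀ z, w z ≠ 1 → ‖v z‖ ≤ 2 * T)
    {x : E} {ρ : ℝ} (hρ : 0 < ρ) (hlayer : 4 * μ {z | w z ≠ 0 ∧ w z ≠ 1} ≤ μ (ball x ρ))
    (hav : ENNReal.ofReal (4 * T) * μ (ball x ρ) ≤ ∫⁻ y in ball x ρ, ‖v y‖ₑ ∂μ) :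
    ∃ r > 0, (r ≤ ρ ∨ μ (ball x (r / 2)) ≤ 2 * μ {z | w z = 1}) ∧
      ENNReal.ofReal r ^ ((Module.finrank ℝ E : ℝ) - 1) ≤
        (μ (ball 0 1))⁻¹ * 2 ^ (2 * Module.finrank ℝ E + 4) * μ.withDensity
          (fun p => ‖fderiv ℝ w p‖ₑ + (ENNReal.ofReal T)⁻¹ * ‖fderiv ℝ v p‖ₑ) (ball x r) := by
  have hω₀ : μ (ball (0 : E) 1) ≠ 0 := (measure_ball_pos μ 0 one_pos).ne'
  have hT' : (ENNReal.ofReal T)⁻¹ ≠ ∞ := ENNReal.inv_ne_top.2 (ENNReal.ofReal_pos.2 hT).ne'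
  simp only [withDensity_apply _ measurableSet_ball, mul_assoc,
    ← ENNReal.mul_le_iff_le_inv hω₀ measure_ball_lt_top.ne]
  rcases le_total (2 * μ ({z | w z = 1} ∩ ball x ρ)) (μ (ball x ρ)) with hsparse | hdense
  · have hclosed : IsClosed {z | w z = 1} := isClosed_eq hw.continuous continuous_const
    refine ⟨ρ, hρ, Or.inl le_rfl,
      (rpow_le_of_sparse μ hv hT hclosed.measurableSet hvw hρ hav hsparse).trans ?_⟩
    rw [← lintegral_const_mul' _ _ hT']
    gcongr ?_ * ∫⁻ p in _, ?_ ∂μ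
    · exact pow_le_pow_right₀ one_le_two (by lia)
    · exact le_add_self
  · obtain ⟨s, hs, hsmall, hgain⟩ := exists_radius_rpow_le_of_dense μ hw hfin hρ hlayer hdense
    refine ⟨2 * s, by positivity, Or.inr (by rwa [mul_div_cancel_left₀ s two_ne_zero]),
      hgain.trans ?_⟩
    gcongr
    exact le_self_add

theorem exists_hausdorffContent_lt_localMaximal_le [Nontrivial E] [InnerProductSpace ℝ F]
    [CompleteSpace F] : ∃ C : ℝ≥0∞, C ≠ ∞ ∧ ∀ v : E → F, ContDiff ℝ 1 v → HasCompactSupport v →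
      ∀ T : ℝ, 0 < T → hausdorffContent E (Module.finrank ℝ E - 1)
        {x | ENNReal.ofReal (5 * T) < localMaximal μ (fun y => ‖v y‖ₑ) 1 x} ≤
          C * ((ENNReal.ofReal T)⁻¹ * ∫⁻ z, ‖fderiv ℝ v z‖ₑ ∂μ) := by
  set d := Module.finrank ℝ E
  have hd₁ : (0 : ℝ) ≤ d - 1 := sub_nonneg.2 (mod_cast Module.finrank_pos (R := ℝ) (M := E))
  have hω₀ : μ (ball (0 : E) 1) ≠ 0 := (measure_ball_pos μ 0 one_pos).ne'
  obtain ⟨K, hK⟩ := exists_lipschitzWith_smoothTransition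
  refine ⟨10 ^ ((d : ℝ) - 1) * ((μ (ball (0 : E) 1))⁻¹ * 2 ^ (2 * d + 4)) * (2 * K + 1),
    by finiteness, fun v hv hvc T hT => ?_⟩
  obtain ⟨δ, hδ, hδ₁, huc⟩ := exists_pos_le_one_dist_lt hvc hv.continuous hT
  obtain ⟨w, hw, hvw, hw₀, hlayer, hgrad⟩ := exists_cutoff_measure_layer_le μ hK hv hvc hT
    (ENNReal.div_pos (measure_ball_pos μ (0 : E) hδ).ne' (ENNReal.ofNat_ne_top (n := 4))).ne'
  have hfin : μ {z | w z = 1} ≠ ∞ := by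
    refine ((measure_mono fun z (hz : w z = 1) => ?_).trans_lt hvc.measure_lt_top).ne
    exact subset_tsupport v fun hvz => zero_ne_one ((hw₀ z hvz).symm.trans hz)
  obtain ⟨R, hR⟩ := exists_forall_le_of_measure_ball_le μ
    (ENNReal.mul_ne_top ENNReal.ofNat_ne_top hfin : 2 * μ {z | w z = 1} ≠ ∞)
  set ν := μ.withDensity fun p => ‖fderiv ℝ w p‖ₑ + (ENNReal.ofReal T)⁻¹ * ‖fderiv ℝ v p‖ₑ
  have hν := withDensity_add_univ_le μ (hw.continuous_fderiv one_ne_zero).enorm.measurable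
    (ENNReal.inv_ne_top.2 (ENNReal.ofReal_pos.2 hT).ne') hgrad
  refine (hausdorffContent_le_of_forall_rpow_le_measure_ball hd₁ ν _ (max 1 (2 * R))
    fun x hx => ?_).trans ((mul_le_mul_right hν _).trans_eq (mul_assoc _ _ _).symm)
  obtain ⟨ρ, ⟨hδρ, hρ₁⟩, hav⟩ := exists_radius_ge_of_lt_localMaximal μ hδ₁ hT huc hx
  have hlayer' : 4 * μ {z | w z ≠ 0 ∧ w z ≠ 1} ≤ μ (ball x ρ) := calc
    4 * μ {z | w z ≠ 0 ∧ w z ≠ 1} ≤ 4 * (μ (ball 0 δ) / 4) := by gcongr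
    _ = μ (ball x δ) := by
        rw [ENNReal.mul_div_cancel (by norm_num) (by norm_num), Measure.addHaar_ball_center μ x]
    _ ≤ μ (ball x ρ) := measure_mono (ball_subset_ball hδρ)
  obtain ⟨r, hr, hrR, hgain⟩ := exists_radius_rpow_le_withDensity μ hv hw hfin hT hvw
    (hδ.trans_le hδρ) hlayer' hav
  refine ⟨r, hr, ?_, hgain⟩
  rcases hrR with hrρ | hsmall
  · exact (hrρ.trans hρ₁).trans (le_max_left _ _)
  · exact le_max_of_le_right (by linarith [hR x _ hsmall])

end Boxing

section Mollification

open scoped Convolution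
open ContinuousLinearMap (lsmul)

lemma lintegral_enorm_convolution_lsmul_le {G V : Type*} [AddGroup G] [MeasurableSpace G]
    [MeasurableAdd₂ G] [MeasurableNeg G] [NormedAddCommGroup V] [NormedSpace ℝ V] {μ : Measure G}
    [SFinite μ] [μ.IsAddRightInvariant] {k : G → ℝ} {u : G → V} (hk : AEStronglyMeasurable k μ)
    (hu : AEStronglyMeasurable u μ) :
    ∫⁻ x, ‖(k ⋆[lsmul ℝ ℝ, μ] u) x‖ₑ ∂μ ≤ (∫⁻ t, ‖k t‖ₑ ∂μ) * ∫⁻ x, ‖u x‖ₑ ∂μ := by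
  have hmeas := hk.convolution_integrand (lsmul ℝ ℝ : ℝ →L[ℝ] V →L[ℝ] V) hu
  calc ∫⁻ x, ‖(k ⋆[lsmul ℝ ℝ, μ] u) x‖ₑ ∂μ
      ≤ ∫⁻ x, ∫⁻ t, ‖k t • u (x - t)‖ₑ ∂μ ∂μ :=
        lintegral_mono fun x => enorm_integral_le_lintegral_enorm _
    _ = ∫⁻ t, ∫⁻ x, ‖k t • u (x - t)‖ₑ ∂μ ∂μ := lintegral_lintegral_swap hmeas.enorm
    _ = ∫⁻ t, ‖k t‖ₑ * ∫⁻ x, ‖u x‖ₑ ∂μ ∂μ := lintegral_congr fun t => by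
        simp_rw [enorm_smul]
        rw [lintegral_const_mul' _ _ enorm_ne_top, lintegral_sub_right_eq_self fun x => ‖u x‖ₑ]
    _ = (∫⁻ t, ‖k t‖ₑ ∂μ) * ∫⁻ x, ‖u x‖ₑ ∂μ := lintegral_mul_const'' _ hk.enorm

variable {E V ι : Type*} [NormedAddCommGroup E] [NormedSpace ℝ E] [FiniteDimensional ℝ E]
  [MeasurableSpace E] [BorelSpace E] {μ : Measure E} [μ.IsAddHaarMeasure]
  [NormedAddCommGroup V] [NormedSpace ℝ V] {u : E → V}
  {φ : ι → ContDiffBump (0 : E)} {l : Filter ι}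

lemma lintegral_enorm_normed_convolution_le (ψ : ContDiffBump (0 : E))
    (hu : AEStronglyMeasurable u μ) :
    ∫⁻ x, ‖(ψ.normed μ ⋆[lsmul ℝ ℝ, μ] u) x‖ₑ ∂μ ≤ ∫⁻ x, ‖u x‖ₑ ∂μ := by
  have hmass : ∫⁻ t, ‖ψ.normed μ t‖ₑ ∂μ = 1 := by
    rw [← ofReal_integral_norm_eq_lintegral_enorm ψ.integrable_normed]
    simp [Real.norm_of_nonneg (ψ.nonneg_normed _), ψ.integral_normed]
  simpa [hmass] using lintegral_enorm_convolution_lsmul_le (k := ψ.normed μ)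
    ψ.continuous_normed.aestronglyMeasurable hu

lemma lintegral_enorm_normed_convolution_sub_le [CompleteSpace V] (hu : Continuous u)
    {ε : ℝ} {ψ : ContDiffBump (0 : E)} (hψ : ψ.rOut ≤ 1)
    (huc : ∀ x y, dist x y < ψ.rOut → dist (u x) (u y) ≤ ε) :
    ∫⁻ x, ‖(ψ.normed μ ⋆[lsmul ℝ ℝ, μ] u) x - u x‖ₑ ∂μ ≤
      ENNReal.ofReal ε * μ (cthickening 1 (tsupport u)) := by
  rw [← lintegral_indicator_const isClosed_cthickening.measurableSet]
  refine lintegral_mono fun x => ?_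
  rw [← edist_eq_enorm_sub, edist_dist]
  by_cases hx : x ∈ cthickening 1 (tsupport u)
  · rw [indicator_of_mem hx]
    exact ENNReal.ofReal_le_ofReal (ψ.dist_normed_convolution_le hu.aestronglyMeasurable
      fun y hy => huc y x hy)
  · have hzero : ∀ y ∈ ball x 1, u y = 0 := fun y hy => image_eq_zero_of_notMem_tsupport
      fun hy' => hx (mem_cthickening_of_dist_le x y 1 _ hy' (mem_ball'.1 hy).le)
    rw [indicator_of_notMem hx, nonpos_iff_eq_zero, ENNReal.ofReal_eq_zero]
    refine ψ.dist_normed_convolution_le hu.aestronglyMeasurable fun y hy => ?_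
    rw [hzero y (ball_subset_ball hψ hy), hzero x (mem_ball_self one_pos), dist_self]

lemma tendsto_lintegral_enorm_normed_convolution_sub_of_continuous [CompleteSpace V]
    (hφ : Tendsto (fun i => (φ i).rOut) l (𝓝 0)) (hu : Continuous u) (huc : HasCompactSupport u) :
    Tendsto (fun i => ∫⁻ x, ‖((φ i).normed μ ⋆[lsmul ℝ ℝ, μ] u) x - u x‖ₑ ∂μ) l (𝓝 0) := by
  have hfin : μ (cthickening 1 (tsupport u)) ≠ ∞ := huc.isCompact.cthickening.measure_ne_top
  rw [ENNReal.tendsto_nhds_zero]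
  intro ε hε
  obtain ⟨c, hc₀, hc⟩ := ENNReal.exists_nnreal_pos_mul_lt hfin hε.ne'
  obtain ⟨δ, hδ, hdist⟩ := Metric.uniformContinuous_iff.1
    (huc.uniformContinuous_of_continuous hu) c hc₀
  filter_upwards [hφ.eventually_lt_const hδ, hφ.eventually_le_const one_pos] with i hi hi₁
  refine (lintegral_enorm_normed_convolution_sub_le hu hi₁
    fun x y hxy => (hdist (hxy.trans hi)).le).trans ?_
  rw [ENNReal.ofReal_coe_nnreal]
  exact hc.le

lemma lintegral_enorm_normed_convolution_sub_le_add {w : E → V} (hu : Integrable u μ)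
    (hw : Integrable w μ) (ψ : ContDiffBump (0 : E)) :
    ∫⁻ x, ‖(ψ.normed μ ⋆[lsmul ℝ ℝ, μ] u) x - u x‖ₑ ∂μ ≤
      2 * ∫⁻ x, ‖u x - w x‖ₑ ∂μ + ∫⁻ x, ‖(ψ.normed μ ⋆[lsmul ℝ ℝ, μ] w) x - w x‖ₑ ∂μ := by
  have hconv : ∀ {z : E → V}, Integrable z μ →
      ConvolutionExists (ψ.normed μ) z (lsmul ℝ ℝ) μ := fun hz =>
    ψ.hasCompactSupport_normed.convolutionExists_left _ ψ.continuous_normed hz.locallyIntegrable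
  have hdiff : ∀ x, (ψ.normed μ ⋆[lsmul ℝ ℝ, μ] (u - w)) x =
      (ψ.normed μ ⋆[lsmul ℝ ℝ, μ] u) x - (ψ.normed μ ⋆[lsmul ℝ ℝ, μ] w) x := fun x => by
    simpa [convolution_def, smul_sub] using integral_sub (hconv hu x) (hconv hw x)
  have hcont : Continuous (ψ.normed μ ⋆[lsmul ℝ ℝ, μ] (u - w)) :=
    ψ.hasCompactSupport_normed.continuous_convolution_left _ ψ.continuous_normed
      (hu.sub hw).locallyIntegrable
  calc ∫⁻ x, ‖(ψ.normed μ ⋆[lsmul ℝ ℝ, μ] u) x - u x‖ₑ ∂μ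
      ≤ ∫⁻ x, (‖(u - w) x‖ₑ + (‖(ψ.normed μ ⋆[lsmul ℝ ℝ, μ] (u - w)) x‖ₑ +
          ‖(ψ.normed μ ⋆[lsmul ℝ ℝ, μ] w) x - w x‖ₑ)) ∂μ := by
        refine lintegral_mono fun x => ?_
        rw [hdiff, Pi.sub_apply, enorm_sub_rev (u x)]
        refine le_trans (le_of_eq ?_)
          ((enorm_add_le _ _).trans (add_le_add_right (enorm_add_le _ _) _))
        congr 1
        abel
    _ = ∫⁻ x, ‖(u - w) x‖ₑ ∂μ + (∫⁻ x, ‖(ψ.normed μ ⋆[lsmul ℝ ℝ, μ] (u - w)) x‖ₑ ∂μ +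
          ∫⁻ x, ‖(ψ.normed μ ⋆[lsmul ℝ ℝ, μ] w) x - w x‖ₑ ∂μ) := by
        rw [lintegral_add_left' (hu.sub hw).1.enorm, lintegral_add_left hcont.enorm.measurable]
    _ ≤ _ := by
        rw [two_mul, add_assoc]
        exact add_le_add_right (add_le_add_left
          (lintegral_enorm_normed_convolution_le ψ (hu.sub hw).1) _) _

theorem tendsto_lintegral_enorm_normed_convolution_sub [CompleteSpace V]
    (hφ : Tendsto (fun i => (φ i).rOut) l (𝓝 0)) (hu : Integrable u μ) :
    Tendsto (fun i => ∫⁻ x, ‖((φ i).normed μ ⋆[lsmul ℝ ℝ, μ] u) x - u x‖ₑ ∂μ) l (𝓝 0) := by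
  rw [ENNReal.tendsto_nhds_zero]
  intro ε hε
  obtain ⟨w, hwc, huw, hw, hwi⟩ := hu.exists_hasCompactSupport_lintegral_sub_le
    (ENNReal.div_pos hε.ne' (ENNReal.ofNat_ne_top (n := 3))).ne'
  filter_upwards [(ENNReal.tendsto_nhds_zero.1
    (tendsto_lintegral_enorm_normed_convolution_sub_of_continuous (μ := μ) hφ hw hwc)) (ε / 3)
    (ENNReal.div_pos hε.ne' (ENNReal.ofNat_ne_top (n := 3)))] with i hi
  calc _ ≤ 2 * (ε / 3) + ε / 3 :=
        (lintegral_enorm_normed_convolution_sub_le_add hu hwi (φ i)).trans (by gcongr)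
    _ = ε := by rw [two_mul, ENNReal.add_thirds]

lemma fderiv_convolution_lsmul_apply {k u : E → ℝ} (hkc : HasCompactSupport k)
    (hk : ContDiff ℝ 1 k) (hu : LocallyIntegrable u μ) (e x : E) :
    fderiv ℝ (k ⋆[lsmul ℝ ℝ, μ] u) x e = ∫ t, u t * fderiv ℝ k (x - t) e ∂μ := by
  have hintegrand : ∀ t, (lsmul ℝ ℝ).precompL E (fderiv ℝ k t) (u (x - t)) =
      u (x - t) • fderiv ℝ k t := fun t => by
    ext y
    simp [ContinuousLinearMap.precompL_apply, mul_comm]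
  have hintegrable : Integrable (fun t => u (x - t) • fderiv ℝ k t) μ :=
    Integrable.congr ((hkc.fderiv ℝ).convolutionExists_left ((lsmul ℝ ℝ).precompL E)
      (hk.continuous_fderiv one_ne_zero) hu x) (.of_forall hintegrand)
  rw [(hkc.hasFDerivAt_convolution_left (lsmul ℝ ℝ) hk hu x).fderiv, convolution_def]
  simp_rw [hintegrand]
  rw [ContinuousLinearMap.integral_apply hintegrable, ← integral_sub_left_eq_self _ μ x]
  simp

end Mollification

section LocalMaximal

variable {X V : Type*} [PseudoMetricSpace X] [MeasurableSpace X] {μ : Measure X}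
  [NormedAddCommGroup V] {ρ : ℝ} {x : X}

lemma localMaximal_le_of_forall_le {u : X → ℝ≥0∞} {c : ℝ≥0∞} (h : ∀ y, u y ≤ c) :
    localMaximal μ u ρ x ≤ c := by
  refine iSup₂_le fun r _ => ?_
  rw [setLAverage_eq]
  refine (ENNReal.div_le_div_right (lintegral_mono h) _).trans ?_
  rw [setLIntegral_const, mul_div_assoc]
  exact mul_le_of_le_one_right' ENNReal.div_self_le_one

lemma enorm_le_add_sum_range_add (v : ℕ → V) (a : V) (k : ℕ) :
    ‖a‖ₑ ≤ ‖v 0‖ₑ + ∑ j ∈ Finset.range k, ‖v (j + 1) - v j‖ₑ + ‖v k - a‖ₑ := calc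
  ‖a‖ₑ = ‖v 0 + ∑ j ∈ Finset.range k, (v (j + 1) - v j) - (v k - a)‖ₑ := by
      rw [Finset.sum_range_sub]
      abel_nf
  _ ≤ _ := enorm_sub_le.trans (add_le_add_left ((enorm_add_le _ _).trans
      (add_le_add_right (enorm_sum_le _ _) _)) _)

lemma localMaximal_enorm_le_add_tsum [μ.IsOpenPosMeasure] {u : X → V} {v : ℕ → X → V}
    (hv : ∀ j, AEStronglyMeasurable (v j) μ)
    (hlim : Tendsto (fun j => ∫⁻ y, ‖v j y - u y‖ₑ ∂μ) atTop (𝓝 0)) :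
    localMaximal μ (fun y => ‖u y‖ₑ) ρ x ≤ localMaximal μ (fun y => ‖v 0 y‖ₑ) ρ x +
      ∑' j, localMaximal μ (fun y => ‖v (j + 1) y - v j y‖ₑ) ρ x := by
  refine iSup₂_le fun r hr => ?_
  have hB : (μ (ball x r))⁻¹ ≠ ∞ := ENNReal.inv_ne_top.2 (measure_ball_pos μ x hr.1).ne'
  have hpartial : ∀ k, ⨍⁻ y in ball x r, ‖u y‖ₑ ∂μ ≤ localMaximal μ (fun y => ‖v 0 y‖ₑ) ρ x +
      ∑' j, localMaximal μ (fun y => ‖v (j + 1) y - v j y‖ₑ) ρ x +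
      (μ (ball x r))⁻¹ * ∫⁻ y, ‖v k y - u y‖ₑ ∂μ := fun k => calc
    ⨍⁻ y in ball x r, ‖u y‖ₑ ∂μ
      ≤ (μ (ball x r))⁻¹ * ∫⁻ y in ball x r, (‖v 0 y‖ₑ +
          ∑ j ∈ Finset.range k, ‖v (j + 1) y - v j y‖ₑ + ‖v k y - u y‖ₑ) ∂μ := by
        rw [setLAverage_eq, ENNReal.div_eq_inv_mul]
        gcongr with y
        exact enorm_le_add_sum_range_add (v · y) (u y) k
    _ = ⨍⁻ y in ball x r, ‖v 0 y‖ₑ ∂μ +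
          ∑ j ∈ Finset.range k, ⨍⁻ y in ball x r, ‖v (j + 1) y - v j y‖ₑ ∂μ +
          (μ (ball x r))⁻¹ * ∫⁻ y in ball x r, ‖v k y - u y‖ₑ ∂μ := by
        have hdiff : ∀ j, AEMeasurable (fun y => ‖v (j + 1) y - v j y‖ₑ) (μ.restrict (ball x r)) :=
          fun j => ((hv (j + 1)).sub (hv j)).enorm.restrict
        rw [lintegral_add_left' ((hv 0).enorm.restrict.fun_add
          (Finset.aemeasurable_fun_sum _ fun j _ => hdiff j)),
          lintegral_add_left' (hv 0).enorm.restrict, lintegral_finsetSum' _ fun j _ => hdiff j]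
        simp only [setLAverage_eq, ENNReal.div_eq_inv_mul, mul_add, Finset.mul_sum]
    _ ≤ _ := by
        gcongr ?_ + ?_ + _ * ?_
        · exact setLAverage_le_localMaximal hr
        · exact (Finset.sum_le_sum fun j _ => setLAverage_le_localMaximal hr).trans
            (ENNReal.sum_le_tsum _)
        · exact setLIntegral_le_lintegral _ _
  have hlim' := (ENNReal.Tendsto.const_mul hlim (Or.inr hB)).const_add
    (localMaximal μ (fun y => ‖v 0 y‖ₑ) ρ x +
      ∑' j, localMaximal μ (fun y => ‖v (j + 1) y - v j y‖ₑ) ρ x)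
  rw [mul_zero, add_zero] at hlim'
  exact ge_of_tendsto' hlim' hpartial

end LocalMaximal

section WeakGradient

open scoped Convolution Gradient
open ContinuousLinearMap (lsmul)

variable {n : ℕ} {u : En n → ℝ} {d : En n → En n}

lemma enorm_gradient (v : En n → ℝ) (x : En n) : ‖∇ v x‖ₑ = ‖fderiv ℝ v x‖ₑ :=
  (InnerProductSpace.toDual ℝ (En n)).symm.enorm_map _

lemma gradient_ofLp_apply (v : En n → ℝ) (x : En n) (i : Fin n) :
    ∇ v x i = fderiv ℝ v x (EuclideanSpace.single i 1) := by
  rw [← inner_gradient_left, EuclideanSpace.inner_single_right]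
  simp

lemma fderiv_normed_convolution_apply_of_hasWeakPartialOn {d : En n → ℝ} {e : En n}
    (hud : HasWeakPartialOn univ u d e) (hu : LocallyIntegrable u)
    (φ : ContDiffBump (0 : En n)) (x : En n) :
    fderiv ℝ (φ.normed volume ⋆[lsmul ℝ ℝ, volume] u) x e =
      (φ.normed volume ⋆[lsmul ℝ ℝ, volume] d) x := by
  have hfderiv : ∀ y, fderiv ℝ (fun y => φ.normed volume (x - y)) y e =
      -fderiv ℝ (φ.normed volume) (x - y) e := fun y => by
    have hφ := (φ.contDiff_normed (μ := volume) (n := 1)).differentiable one_ne_zero (x - y)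
    exact (DFunLike.congr_fun
      (hφ.hasFDerivAt.comp y ((hasFDerivAt_id y).const_sub x)).fderiv e).trans (by simp)
  have htest : IsTest univ fun y => φ.normed volume (x - y) :=
    ⟨φ.contDiff_normed.comp (contDiff_const.sub contDiff_id),
      φ.hasCompactSupport_normed.comp_homeomorph (Homeomorph.subLeft x), subset_univ _⟩
  have hparts := hud _ htest
  simp only [hfderiv, mul_neg, integral_neg, neg_inj] at hparts
  rw [fderiv_convolution_lsmul_apply φ.hasCompactSupport_normed φ.contDiff_normed hu, hparts,
    convolution_def, ← integral_sub_left_eq_self _ volume x]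
  simp [mul_comm]

lemma gradient_normed_convolution_of_hasWeakGradientOn (hud : HasWeakGradientOn univ u d)
    (hu : LocallyIntegrable u) (hd : LocallyIntegrable d) (φ : ContDiffBump (0 : En n)) :
    ∇ (φ.normed volume ⋆[lsmul ℝ ℝ, volume] u) = φ.normed volume ⋆[lsmul ℝ ℝ, volume] d := by
  ext x i
  have hexists := (φ.hasCompactSupport_normed (μ := volume)).convolutionExists_left (μ := volume)
    (lsmul ℝ ℝ : ℝ →L[ℝ] En n →L[ℝ] En n) φ.continuous_normed hd x
  rw [gradient_ofLp_apply, fderiv_normed_convolution_apply_of_hasWeakPartialOn (hud i) hu]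
  simpa [convolution_def] using
    (EuclideanSpace.proj i : En n →L[ℝ] ℝ).integral_comp_comm hexists

theorem exists_seq_contDiff_tendsto_gradient (hud : HasWeakGradientOn univ u d)
    (hu : Integrable u) (hd : Integrable d) :
    ∃ v : ℕ → En n → ℝ, (∀ j, ContDiff ℝ 1 (v j)) ∧
      (HasCompactSupport u → ∀ j, HasCompactSupport (v j)) ∧
      Tendsto (fun j => ∫⁻ x, ‖v j x - u x‖ₑ) atTop (𝓝 0) ∧
      Tendsto (fun j => ∫⁻ x, ‖∇ (v j) x - d x‖ₑ) atTop (𝓝 0) := by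
  let φ : ℕ → ContDiffBump (0 : En n) := fun j =>
    ⟨1 / (j + 1) / 2, 1 / (j + 1), by positivity, half_lt_self (by positivity)⟩
  have hφ : Tendsto (fun j => (φ j).rOut) atTop (𝓝 0) := tendsto_one_div_add_atTop_nhds_zero_nat
  refine ⟨fun j => (φ j).normed volume ⋆[lsmul ℝ ℝ, volume] u, fun j => ?_, fun huc j => ?_,
    tendsto_lintegral_enorm_normed_convolution_sub hφ hu, ?_⟩
  · exact (φ j).hasCompactSupport_normed.contDiff_convolution_left _ (φ j).contDiff_normed
      hu.locallyIntegrable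
  · exact (φ j).hasCompactSupport_normed.convolution _ huc
  · simp_rw [gradient_normed_convolution_of_hasWeakGradientOn hud hu.locallyIntegrable
      hd.locallyIntegrable]
    exact tendsto_lintegral_enorm_normed_convolution_sub hφ hd

end WeakGradient

section WeakPoincare

open scoped Gradient

lemma lintegral_lintegral_enorm_sub_le_add {X V : Type*} [MeasurableSpace X] {ν : Measure X}
    [IsFiniteMeasure ν] [NormedAddCommGroup V] {u v : X → V} (hu : AEStronglyMeasurable u ν)
    (hv : AEStronglyMeasurable v ν) :
    ∫⁻ y, ∫⁻ z, ‖u y - u z‖ₑ ∂ν ∂ν ≤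
      ∫⁻ y, ∫⁻ z, ‖v y - v z‖ₑ ∂ν ∂ν + 2 * ν univ * ∫⁻ z, ‖v z - u z‖ₑ ∂ν := by
  have hdiff : AEMeasurable (fun z => ‖v z - u z‖ₑ) ν := (hv.sub hu).enorm
  have hpointwise : ∀ y z, ‖u y - u z‖ₑ ≤ ‖v y - v z‖ₑ + (‖v y - u y‖ₑ + ‖v z - u z‖ₑ) :=
    fun y z => calc
      ‖u y - u z‖ₑ = ‖(v y - v z) - ((v y - u y) - (v z - u z))‖ₑ := by abel_nf
      _ ≤ _ := enorm_sub_le.trans (add_le_add_right enorm_sub_le _)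
  calc ∫⁻ y, ∫⁻ z, ‖u y - u z‖ₑ ∂ν ∂ν
    _ ≤ ∫⁻ y, ∫⁻ z, (‖v y - v z‖ₑ + (‖v y - u y‖ₑ + ‖v z - u z‖ₑ)) ∂ν ∂ν :=
        lintegral_mono fun y => lintegral_mono fun z => hpointwise y z
    _ = ∫⁻ y, (∫⁻ z, ‖v y - v z‖ₑ ∂ν + (‖v y - u y‖ₑ * ν univ + ∫⁻ z, ‖v z - u z‖ₑ ∂ν)) ∂ν := by
        simp_rw [lintegral_add_right' _ (hdiff.const_add _), lintegral_add_right' _ hdiff,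
          lintegral_const]
    _ = _ := by
        rw [lintegral_add_right' _ ((hdiff.mul_const _).add_const _),
          lintegral_add_right _ measurable_const, lintegral_mul_const'' _ hdiff, lintegral_const]
        ring

variable {n : ℕ} {u v : En n → ℝ} {d : En n → En n} {s : Set (En n)}

lemma setLIntegral_enorm_fderiv_le_add (hd : AEStronglyMeasurable d) :
    ∫⁻ p in s, ‖fderiv ℝ v p‖ₑ ≤ (∫⁻ p in s, ‖d p‖ₑ) + ∫⁻ p, ‖∇ v p - d p‖ₑ := calc
  ∫⁻ p in s, ‖fderiv ℝ v p‖ₑ ≤ ∫⁻ p in s, (‖d p‖ₑ + ‖∇ v p - d p‖ₑ) :=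
      lintegral_mono fun p => by
        simpa [← enorm_gradient] using enorm_add_le (d p) (∇ v p - d p)
  _ = (∫⁻ p in s, ‖d p‖ₑ) + ∫⁻ p in s, ‖∇ v p - d p‖ₑ :=
      lintegral_add_left' hd.enorm.restrict _
  _ ≤ _ := add_le_add_right (setLIntegral_le_lintegral _ _) _

lemma lintegral_lintegral_enorm_sub_le_of_contDiff (hv : ContDiff ℝ 1 v)
    (hu : AEStronglyMeasurable u) (hd : AEStronglyMeasurable d) (hs : Convex ℝ s)
    (hsm : MeasurableSet s) (hsb : Bornology.IsBounded s) :
    ∫⁻ y in s, ∫⁻ z in s, ‖u y - u z‖ₑ ≤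
      ediam s * (2 ^ n * volume s * ((∫⁻ p in s, ‖d p‖ₑ) + ∫⁻ p, ‖∇ v p - d p‖ₑ)) +
        2 * volume s * ∫⁻ p, ‖v p - u p‖ₑ := by
  have : IsFiniteMeasure (volume.restrict s) := ⟨by simpa using hsb.measure_lt_top⟩
  have hpoincare := lintegral_lintegral_enorm_sub_le_fderiv volume hv hs hsm hsb
  rw [finrank_euclideanSpace_fin] at hpoincare
  refine (lintegral_lintegral_enorm_sub_le_add hu.restrict
    hv.continuous.aestronglyMeasurable).trans ?_
  rw [Measure.restrict_apply_univ]
  gcongr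
  · exact hpoincare.trans (by gcongr; exact setLIntegral_enorm_fderiv_le_add hd)
  · exact Measure.restrict_le_self

theorem lintegral_lintegral_enorm_sub_le_of_hasWeakGradientOn
    (hud : HasWeakGradientOn univ u d) (hu : Integrable u) (hd : Integrable d)
    (hs : Convex ℝ s) (hsm : MeasurableSet s) (hsb : Bornology.IsBounded s) :
    ∫⁻ y in s, ∫⁻ z in s, ‖u y - u z‖ₑ ≤
      ediam s * (2 ^ n * volume s * ∫⁻ p in s, ‖d p‖ₑ) := by
  obtain ⟨v, hv, -, hvu, hvd⟩ := exists_seq_contDiff_tendsto_gradient hud hu hd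
  have hediam : ediam s ≠ ∞ := hsb.ediam_ne_top
  have hvol : volume s ≠ ∞ := hsb.measure_lt_top.ne
  have hlim := (ENNReal.Tendsto.const_mul (a := ediam s) (ENNReal.Tendsto.const_mul
    (a := 2 ^ n * volume s) (hvd.const_add (∫⁻ p in s, ‖d p‖ₑ)) (Or.inr (by finiteness)))
    (Or.inr hediam)).add (ENNReal.Tendsto.const_mul (a := 2 * volume s) hvu
      (Or.inr (by finiteness)))
  simp only [add_zero, mul_zero] at hlim
  exact ge_of_tendsto' hlim fun j =>
    lintegral_lintegral_enorm_sub_le_of_contDiff (hv j) hu.1 hd.1 hs hsm hsb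

end WeakPoincare

section MaximalFiniteness

open scoped Gradient

variable {n : ℕ} {u : En n → ℝ} {d : En n → En n}

lemma lintegral_enorm_fderiv_sub_le {v w : En n → ℝ} (hv : ContDiff ℝ 1 v) (hw : ContDiff ℝ 1 w)
    (hd : AEStronglyMeasurable d) :
    ∫⁻ x, ‖fderiv ℝ (v - w) x‖ₑ ≤ (∫⁻ x, ‖∇ v x - d x‖ₑ) + ∫⁻ x, ‖∇ w x - d x‖ₑ := by
  have hcont : Continuous (∇ v) :=
    (InnerProductSpace.toDual ℝ (En n)).symm.continuous.comp (hv.continuous_fderiv one_ne_zero)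
  have hmeas : AEMeasurable fun x => ‖∇ v x - d x‖ₑ := (hcont.aestronglyMeasurable.sub hd).enorm
  rw [← lintegral_add_left' hmeas]
  refine lintegral_mono fun x => ?_
  have hsub : ‖fderiv ℝ (v - w) x‖ₑ = ‖∇ v x - d x - (∇ w x - d x)‖ₑ := by
    rw [fderiv_sub (hv.differentiable one_ne_zero x) (hw.differentiable one_ne_zero x),
      sub_sub_sub_cancel_right]
    exact ((InnerProductSpace.toDual ℝ (En n)).symm.enorm_map _).symm.trans
      (by rw [map_sub]; rfl)
  exact hsub.trans_le enorm_sub_le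

lemma exists_seq_contDiff_lintegral_enorm_fderiv_sub_le (hud : HasWeakGradientOn univ u d)
    (hu : Integrable u) (huc : HasCompactSupport u) (hd : Integrable d) {ε : ℕ → ℝ≥0∞}
    (hε : ∀ j, 0 < ε j) :
    ∃ v : ℕ → En n → ℝ, (∀ j, ContDiff ℝ 1 (v j)) ∧ (∀ j, HasCompactSupport (v j)) ∧
      Tendsto (fun j => ∫⁻ x, ‖v j x - u x‖ₑ) atTop (𝓝 0) ∧
      ∀ j, ∫⁻ x, ‖fderiv ℝ (v (j + 1) - v j) x‖ₑ ≤ ε j := by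
  obtain ⟨v, hv, hvc, hvu, hvd⟩ := exists_seq_contDiff_tendsto_gradient hud hu hd
  have hev : ∀ j, ∀ᶠ k in atTop, ∀ l ≥ k, ∫⁻ x, ‖∇ (v l) x - d x‖ₑ ≤ ε j / 2 := fun j =>
    eventually_forall_ge_atTop.2
      ((hvd.eventually_lt_const (ENNReal.half_pos (hε j).ne')).mono fun k hk => hk.le)
  obtain ⟨φ, hφ, hφε⟩ := extraction_forall_of_eventually hev
  refine ⟨v ∘ φ, fun j => hv _, fun j => hvc huc _, hvu.comp hφ.tendsto_atTop, fun j => ?_⟩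
  calc ∫⁻ x, ‖fderiv ℝ (v (φ (j + 1)) - v (φ j)) x‖ₑ
    _ ≤ ε j / 2 + ε j / 2 := (lintegral_enorm_fderiv_sub_le (hv _) (hv _) hd.1).trans
        (add_le_add (hφε j _ (hφ.monotone j.le_succ)) (hφε j _ le_rfl))
    _ = ε j := ENNReal.add_halves _

lemma localMaximal_enorm_ne_top_of_eventually_le {v : ℕ → En n → ℝ} {x : En n} {ρ : ℝ}
    (hv : ∀ j, Continuous (v j)) (hvc : ∀ j, HasCompactSupport (v j))
    (hvu : Tendsto (fun j => ∫⁻ x, ‖v j x - u x‖ₑ) atTop (𝓝 0)) {b : ℕ → ℝ≥0∞}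
    (hb : ∑' j, b j ≠ ∞)
    (hx : ∀ᶠ j in atTop,
      localMaximal volume (fun y => ‖v (j + 1) y - v j y‖ₑ) ρ x ≤ b j) :
    localMaximal volume (fun y => ‖u y‖ₑ) ρ x ≠ ∞ := by
  obtain ⟨J, hJ⟩ := eventually_atTop.1 hx
  obtain ⟨c, hc⟩ := (hv J).bounded_above_of_compact_support (hvc J)
  have hstart : localMaximal volume (fun y => ‖v J y‖ₑ) ρ x ≤ ENNReal.ofReal c :=
    localMaximal_le_of_forall_le fun y => by
      simpa only [← ofReal_norm] using ENNReal.ofReal_le_ofReal (hc y)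
  have hsum : ∑' j, localMaximal volume (fun y => ‖v (j + 1 + J) y - v (j + J) y‖ₑ) ρ x ≤
      ∑' j, b j :=
    (ENNReal.tsum_le_tsum fun j => by
      simpa only [add_right_comm] using hJ (j + J) (Nat.le_add_left J j)).trans
      (ENNReal.tsum_comp_le_tsum_of_injective (add_left_injective J) b)
  have htelescope := localMaximal_enorm_le_add_tsum (ρ := ρ) (x := x) (v := fun j => v (j + J))
    (fun j => (hv (j + J)).aestronglyMeasurable) ((tendsto_add_atTop_iff_nat J).2 hvu)
  rw [zero_add] at htelescope
  exact ne_top_of_le_ne_top (by finiteness) (htelescope.trans (add_le_add hstart hsum))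

lemma hausdorffContent_limsup_lt_localMaximal_eq_zero [NeZero n] {v : ℕ → En n → ℝ} {T : ℕ → ℝ}
    (hv : ∀ j, ContDiff ℝ 1 (v j)) (hvc : ∀ j, HasCompactSupport (v j)) (hT : ∀ j, 0 < T j)
    (hTsum : Summable T)
    (hvd : ∀ j, ∫⁻ x, ‖fderiv ℝ (v (j + 1) - v j) x‖ₑ ≤
      ENNReal.ofReal (T j) * ENNReal.ofReal (T j)) :
    hausdorffContent (En n) (n - 1) (limsup (fun j => {x | ENNReal.ofReal (5 * T j) <
      localMaximal volume (fun y => ‖(v (j + 1) - v j) y‖ₑ) 1 x}) atTop) = 0 := by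
  obtain ⟨C, hC, hboxing⟩ := exists_hausdorffContent_lt_localMaximal_le (F := ℝ)
    (volume : Measure (En n))
  refine measure_limsup_atTop_eq_zero (ne_top_of_le_ne_top
    (ENNReal.mul_ne_top hC hTsum.tsum_ofReal_ne_top) ((ENNReal.tsum_le_tsum fun j => ?_).trans_eq
      ENNReal.tsum_mul_left))
  rw [finrank_euclideanSpace_fin] at hboxing
  calc _
    _ ≤ C * ((ENNReal.ofReal (T j))⁻¹ * ∫⁻ x, ‖fderiv ℝ (v (j + 1) - v j) x‖ₑ) :=
        hboxing (v (j + 1) - v j) ((hv _).sub (hv _)) ((hvc _).sub (hvc _)) (T j) (hT j)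
    _ ≤ C * ((ENNReal.ofReal (T j))⁻¹ * (ENNReal.ofReal (T j) * ENNReal.ofReal (T j))) := by
        gcongr
        exact hvd j
    _ = C * ENNReal.ofReal (T j) := by
        rw [ENNReal.inv_mul_cancel_left' (by simp) (by simp)]

theorem hausdorffMeasure_localMaximal_eq_top_of_hasWeakGradientOn
    (hud : HasWeakGradientOn univ u d) (hu : Integrable u) (huc : HasCompactSupport u)
    (hd : Integrable d) :
    μH[(n : ℝ) - 1] {x | localMaximal volume (fun y => ‖u y‖ₑ) 1 x = ∞} = 0 := by
  rcases n.eq_zero_or_pos with rfl | hn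
  · have hfinite : ∀ x, localMaximal volume (fun y => ‖u y‖ₑ) 1 x ≠ ∞ := fun x =>
      ne_top_of_le_ne_top enorm_ne_top (localMaximal_le_of_forall_le fun y =>
        (congr_arg (‖u ·‖ₑ) (Subsingleton.elim y 0)).le)
    simp [hfinite]
  have : NeZero n := ⟨hn.ne'⟩
  let T : ℕ → ℝ := fun j => (1 / 2) ^ j
  have hT : ∀ j, 0 < T j := fun j => by positivity
  obtain ⟨v, hv, hvc, hvu, hvd⟩ := exists_seq_contDiff_lintegral_enorm_fderiv_sub_le hud hu huc hd
    (ε := fun j => ENNReal.ofReal (T j) * ENNReal.ofReal (T j)) fun j => by simp [T]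
  refine hausdorffMeasure_eq_zero_of_hausdorffContent_eq_zero
    (sub_nonneg.2 (Nat.one_le_cast.2 hn)) (measure_mono_null (fun x hx => ?_)
      (hausdorffContent_limsup_lt_localMaximal_eq_zero hv hvc hT summable_geometric_two hvd))
  by_contra hxA
  rw [mem_limsup_iff_frequently_mem, not_frequently] at hxA
  exact localMaximal_enorm_ne_top_of_eventually_le (fun j => (hv j).continuous) hvc hvu
    (summable_geometric_two.mul_left 5).tsum_ofReal_ne_top
    (hxA.mono fun j hj => not_lt.1 hj) hx

end MaximalFiniteness

section Localization

open scoped Gradient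

variable {n : ℕ} {Ω : Set (En n)} {u χ η : En n → ℝ} {d : En n → En n}

lemma IsTest.integrable_mul (hη : IsTest Ω η) (hu : LocallyIntegrableOn u Ω) :
    Integrable (fun x => u x * η x) :=
  (integrableOn_iff_integrable_of_support_subset
    ((Function.support_mul_subset_right u η).trans (subset_tsupport η))).1
    ((hu.integrableOn_compact_subset hη.2.2 hη.2.1).mul_continuousOn
      hη.1.continuous.continuousOn hη.2.1)

lemma IsTest.fderiv_apply (hη : IsTest Ω η) (e : En n) : IsTest Ω (fun x => fderiv ℝ η x e) :=
  ⟨(hη.1.fderiv_right (by simp)).clm_apply contDiff_const, hη.2.1.fderiv_apply ℝ e,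
    (tsupport_fderiv_apply_subset ℝ e).trans hη.2.2⟩

lemma IsTest.mul_left (hχ : IsTest Ω χ) (hη : ContDiff ℝ (⊤ : ℕ∞) η) :
    IsTest Ω (fun x => χ x * η x) :=
  ⟨hχ.1.mul hη, hχ.2.1.mul_right, (tsupport_mul_subset_left (f := χ) (g := η)).trans hχ.2.2⟩

lemma IsTest.add (hχ : IsTest Ω χ) (hη : IsTest Ω η) : IsTest Ω (fun x => χ x + η x) :=
  ⟨hχ.1.add hη.1, hχ.2.1.add hη.2.1, (tsupport_add χ η).trans (union_subset hχ.2.2 hη.2.2)⟩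

lemma HasWeakPartialOn.mul_isTest {d : En n → ℝ} {e : En n} (hud : HasWeakPartialOn Ω u d e)
    (hu : LocallyIntegrableOn u Ω) (hd : LocallyIntegrableOn d Ω) (hχ : IsTest Ω χ) :
    HasWeakPartialOn univ (fun x => u x * χ x)
      (fun x => d x * χ x + u x * fderiv ℝ χ x e) e := by
  intro η hη
  have hfderiv : ∀ x, fderiv ℝ (fun x => χ x * η x) x e =
      χ x * fderiv ℝ η x e + fderiv ℝ χ x e * η x := fun x => by
    rw [fderiv_fun_mul (hχ.1.differentiable (by simp) x) (hη.1.differentiable (by simp) x)]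
    simp [mul_comm]
  have hparts := hud _ (hχ.mul_left hη.1)
  have hudη : Integrable (fun x => u x * (χ x * fderiv ℝ η x e)) :=
    (hχ.mul_left (hη.fderiv_apply e).1).integrable_mul hu
  have huχη : Integrable (fun x => u x * (fderiv ℝ χ x e * η x)) :=
    ((hχ.fderiv_apply e).mul_left hη.1).integrable_mul hu
  simp_rw [hfderiv, mul_add] at hparts
  rw [integral_add hudη huχη] at hparts
  simp_rw [add_mul, mul_assoc]
  rw [integral_add ((hχ.mul_left hη.1).integrable_mul hd) huχη]
  linarith

lemma HasWeakGradientOn.mul_isTest (hud : HasWeakGradientOn Ω u d)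
    (hu : LocallyIntegrableOn u Ω) (hd : LocallyIntegrableOn d Ω) (hχ : IsTest Ω χ) :
    HasWeakGradientOn univ (fun x => u x * χ x) (fun x => χ x • d x + u x • ∇ χ x) := by
  intro i
  have hdi := (EuclideanSpace.proj i : En n →L[ℝ] ℝ).locallyIntegrableOn_comp hd
  simpa [gradient_ofLp_apply, mul_comm] using (hud i).mul_isTest hu hdi hχ

lemma integrable_smul_add_smul_gradient (hu : LocallyIntegrableOn u Ω)
    (hd : LocallyIntegrableOn d Ω) (hχ : IsTest Ω χ) :
    Integrable (fun x => χ x • d x + u x • ∇ χ x) :=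
  .of_eval_piLp fun i => by
    have hdi := (EuclideanSpace.proj i : En n →L[ℝ] ℝ).locallyIntegrableOn_comp hd
    have huχ := (hχ.fderiv_apply (EuclideanSpace.single i 1)).integrable_mul hu
    simpa [gradient_ofLp_apply, mul_comm] using (hχ.integrable_mul hdi).fun_add huχ

lemma isTest_contDiffBump {p : En n} (χ : ContDiffBump p) (hχ : closedBall p χ.rOut ⊆ Ω) :
    IsTest Ω χ :=
  ⟨χ.contDiff, χ.hasCompactSupport, χ.tsupport_eq.subset.trans hχ⟩

theorem exists_hasWeakGradientOn_univ_eqOn_ball {p : En n} {ρ : ℝ}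
    (hud : HasWeakGradientOn Ω u d) (hu : LocallyIntegrableOn u Ω)
    (hd : LocallyIntegrableOn d Ω) (hρ : 0 < ρ) (hΩ : closedBall p (2 * ρ) ⊆ Ω) :
    ∃ (u' : En n → ℝ) (d' : En n → En n), HasWeakGradientOn univ u' d' ∧ Integrable u' ∧
      HasCompactSupport u' ∧ Integrable d' ∧ EqOn u' u (ball p ρ) ∧ EqOn d' d (ball p ρ) := by
  let χ : ContDiffBump p := ⟨ρ, 2 * ρ, hρ, by linarith⟩
  have hχ : IsTest Ω χ := isTest_contDiffBump χ hΩ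
  have hχ_one : EqOn χ 1 (ball p ρ) := fun x hx =>
    χ.one_of_mem_closedBall (ball_subset_closedBall hx)
  refine ⟨_, _, hud.mul_isTest hu hd hχ, hχ.integrable_mul hu, hχ.2.1.mul_left,
    integrable_smul_add_smul_gradient hu hd hχ, fun x hx => by simp [hχ_one hx], fun x hx => ?_⟩
  have hgradient : ∇ (χ : En n → ℝ) x = 0 := by
    rw [gradient, (hχ_one.eventuallyEq_of_mem (isOpen_ball.mem_nhds hx)).fderiv_eq]
    simp
  simp [hχ_one hx, hgradient]

end Localization

section LocalMaximalFiniteness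

variable {n : ℕ} {Ω : Set (En n)} {u w : En n → ℝ} {d : En n → En n} {e : En n}

theorem hausdorffMeasure_forall_localMaximal_eq_top (hΩ : IsOpen Ω)
    (hud : HasWeakGradientOn Ω u d) (hu : LocallyIntegrableOn u Ω)
    (hd : LocallyIntegrableOn d Ω) :
    μH[(n : ℝ) - 1] {x ∈ Ω | ∀ ρ > 0, localMaximal volume (fun y => ‖u y‖ₑ) ρ x = ∞} = 0 := by
  refine measure_null_of_locally_null _ fun p hp => ?_
  obtain ⟨R, hR, hRΩ⟩ := nhds_basis_closedBall.mem_iff.1 (hΩ.mem_nhds hp.1)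
  obtain ⟨u', d', hud', hu', huc', hd', hu_eq, -⟩ :=
    exists_hasWeakGradientOn_univ_eqOn_ball hud hu hd (half_pos hR)
      (by rwa [mul_div_cancel₀ R two_ne_zero])
  refine ⟨_, inter_mem self_mem_nhdsWithin (mem_nhdsWithin_of_mem_nhds
    (ball_mem_nhds p (half_pos (half_pos hR)))), measure_mono_null ?_
    (hausdorffMeasure_localMaximal_eq_top_of_hasWeakGradientOn hud' hu' huc' hd')⟩
  rintro x ⟨⟨-, hx⟩, hxp⟩
  have hball : ball x (min 1 (R / 2 / 2)) ⊆ ball p (R / 2) :=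
    ball_subset_ball' (by linarith [min_le_right 1 (R / 2 / 2), mem_ball.1 hxp])
  exact top_le_iff.1 <| calc
    ∞ = localMaximal volume (fun y => ‖u y‖ₑ) (min 1 (R / 2 / 2)) x := (hx _ (by positivity)).symm
    _ ≤ localMaximal volume (fun y => ‖u' y‖ₑ) (min 1 (R / 2 / 2)) x :=
        localMaximal_mono_of_subset hball fun y hy => by rw [hu_eq hy]
    _ ≤ localMaximal volume (fun y => ‖u' y‖ₑ) 1 x := localMaximal_mono_radius (min_le_left _ _)

lemma locallyIntegrableOn_of_forall_isTest (hΩ : IsOpen Ω)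
    (hw : ∀ η, IsTest Ω η → Integrable (fun x => w x * η x)) : LocallyIntegrableOn w Ω := by
  intro p hp
  obtain ⟨R, hR, hRΩ⟩ := nhds_basis_closedBall.mem_iff.1 (hΩ.mem_nhds hp)
  let χ : ContDiffBump p := ⟨R / 2, R, half_pos hR, half_lt_self hR⟩
  refine ⟨closedBall p (R / 2), mem_nhdsWithin_of_mem_nhds (closedBall_mem_nhds p (half_pos hR)),
    (hw χ (isTest_contDiffBump χ hRΩ)).integrableOn.congr_fun (fun x hx => ?_)
      measurableSet_closedBall⟩
  simp [χ.one_of_mem_closedBall hx]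

/- The integral of a nonintegrable function is `0`, and for every test function `η` one of `w * η`
and `w * (η₀ + η)` is not integrable, so in either case `u * ∂ₑη` has integral `0`. -/
lemma HasWeakPartialOn.zero_of_not_integrable {η₀ : En n → ℝ} (huw : HasWeakPartialOn Ω u w e)
    (hu : LocallyIntegrableOn u Ω) (hη₀ : IsTest Ω η₀)
    (hwη₀ : ¬ Integrable (fun x => w x * η₀ x)) : HasWeakPartialOn Ω u 0 e := by
  have hzero : ∀ η, IsTest Ω η → ¬ Integrable (fun x => w x * η x) →
      ∫ x, u x * fderiv ℝ η x e = 0 := fun η hη hwη => by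
    rw [huw η hη, integral_undef hwη, neg_zero]
  intro η hη
  suffices ∫ x, u x * fderiv ℝ η x e = 0 by simpa using this
  by_cases hwη : Integrable (fun x => w x * η x)
  · have hsum := hzero _ (hη₀.add hη) fun hw => hwη₀ <|
      (hw.sub hwη).congr (.of_forall fun x => by simp [mul_add])
    have hfderiv : ∀ x, fderiv ℝ (fun x => η₀ x + η x) x e = fderiv ℝ η₀ x e + fderiv ℝ η x e :=
      fun x => by
        rw [fderiv_fun_add (hη₀.1.differentiable (by simp) x) (hη.1.differentiable (by simp) x)]
        rfl
    simp_rw [hfderiv, mul_add] at hsum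
    rwa [integral_add ((hη₀.fderiv_apply e).integrable_mul hu)
      ((hη.fderiv_apply e).integrable_mul hu), hzero _ hη₀ hwη₀, zero_add] at hsum
  · exact hzero η hη hwη

lemma HasWeakPartialOn.exists_locallyIntegrableOn (huw : HasWeakPartialOn Ω u w e)
    (hΩ : IsOpen Ω) (hu : LocallyIntegrableOn u Ω) :
    ∃ w', HasWeakPartialOn Ω u w' e ∧ LocallyIntegrableOn w' Ω := by
  by_cases hw : ∀ η, IsTest Ω η → Integrable (fun x => w x * η x)
  · exact ⟨w, huw, locallyIntegrableOn_of_forall_isTest hΩ hw⟩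
  · push Not at hw
    obtain ⟨η₀, hη₀, hwη₀⟩ := hw
    exact ⟨0, huw.zero_of_not_integrable hu hη₀ hwη₀, locallyIntegrableOn_zero⟩

lemma HasWeakGradientOn.exists_locallyIntegrableOn (hud : HasWeakGradientOn Ω u d)
    (hΩ : IsOpen Ω) (hu : LocallyIntegrableOn u Ω) :
    ∃ d', HasWeakGradientOn Ω u d' ∧ LocallyIntegrableOn d' Ω := by
  choose w hw hwi using fun i => (hud i).exists_locallyIntegrableOn hΩ hu
  refine ⟨fun x => WithLp.toLp 2 fun i => w i x, hw,
    (locallyIntegrableOn_iff hΩ.isLocallyClosed).2 fun K hK hKc => ?_⟩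
  exact .of_eval_piLp fun i => (hwi i).integrableOn_compact_subset hK hKc

lemma enorm_le_sum_enorm_ofLp {m : ℕ} (x : En m) : ‖x‖ₑ ≤ ∑ i, ‖x i‖ₑ := by
  have hx : x = ∑ i, x i • EuclideanSpace.single i (1 : ℝ) := by
    ext j
    simp [Finset.sum_apply, Pi.single_apply]
  calc ‖x‖ₑ = ‖∑ i, x i • EuclideanSpace.single i (1 : ℝ)‖ₑ := by rw [← hx]
    _ ≤ ∑ i, ‖x i • EuclideanSpace.single i (1 : ℝ)‖ₑ := enorm_sum_le _ _
    _ = ∑ i, ‖x i‖ₑ := by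
        simp [enorm_smul, ← ofReal_norm (EuclideanSpace.single _ (1 : ℝ))]

theorem hausdorffMeasure_forall_localMaximal_enorm_euclidean_eq_top {m : ℕ} {g : En n → En m}
    {h : En n → Fin m → En n} (hΩ : IsOpen Ω) (hg : AEStronglyMeasurable g)
    (hgi : LocallyIntegrableOn g Ω)
    (hgh : ∀ i, HasWeakGradientOn Ω (fun x => g x i) (fun x => h x i)) :
    μH[(n : ℝ) - 1] {x ∈ Ω | ∀ ρ > 0, localMaximal volume (fun y => ‖g y‖ₑ) ρ x = ∞} = 0 := by
  have hcomp : ∀ i, LocallyIntegrableOn (fun x => g x i) Ω := fun i =>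
    (EuclideanSpace.proj i : En m →L[ℝ] ℝ).locallyIntegrableOn_comp hgi
  have hmeas : ∀ i, AEMeasurable (fun x => ‖g x i‖ₑ) := fun i =>
    ((EuclideanSpace.proj i : En m →L[ℝ] ℝ).continuous.comp_aestronglyMeasurable hg).enorm
  choose d hgd hdi using fun i => (hgh i).exists_locallyIntegrableOn hΩ (hcomp i)
  refine measure_mono_null (fun x hx => ?_) (measure_iUnion_null fun i =>
    hausdorffMeasure_forall_localMaximal_eq_top hΩ (hgd i) (hcomp i) (hdi i))
  by_contra hxi
  simp only [mem_iUnion, mem_ofPred_eq, not_exists, not_and, not_forall] at hxi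
  have hfinite : ∀ᶠ ρ in 𝓝[>] (0 : ℝ), ∀ i, localMaximal volume (fun y => ‖g y i‖ₑ) ρ x ≠ ∞ :=
    eventually_all.2 fun i => by
      obtain ⟨ρ, hρ, hne⟩ := hxi i hx.1
      filter_upwards [Ioc_mem_nhdsGT hρ] with r hr
      exact ne_top_of_le_ne_top hne (localMaximal_mono_radius hr.2)
  obtain ⟨ρ, hne, hρ⟩ := (hfinite.and self_mem_nhdsWithin).exists
  have hsum : ∑ i, localMaximal volume (fun y => ‖g y i‖ₑ) ρ x ≠ ∞ :=
    ENNReal.sum_ne_top.2 fun i _ => hne i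
  refine hsum (top_le_iff.1 ?_)
  calc ∞ = localMaximal volume (fun y => ‖g y‖ₑ) ρ x := (hx.2 ρ hρ).symm
    _ ≤ localMaximal volume (fun y => ∑ i, ‖g y i‖ₑ) ρ x :=
        localMaximal_mono_of_subset (subset_univ _) fun y _ => enorm_le_sum_enorm_ofLp (g y)
    _ ≤ ∑ i, localMaximal volume (fun y => ‖g y i‖ₑ) ρ x :=
        localMaximal_finsetSum_le _ fun i _ => hmeas i

end LocalMaximalFiniteness

section AverageConvergence

variable {X : Type*} {a : ℝ → X} {C ρ : ℝ}

lemma dist_le_two_mul_of_dyadic [PseudoMetricSpace X] (hC : 0 ≤ C)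
    (h : ∀ r s, 0 < r → r ≤ ρ → r / 2 ≤ s → s ≤ r → dist (a s) (a r) ≤ C * r) {r s : ℝ}
    (hs : 0 < s) (hsr : s ≤ r) (hr : r ≤ ρ) : dist (a s) (a r) ≤ 2 * C * r := by
  have hdyadic : ∀ (m : ℕ) (r : ℝ), s ≤ r → r ≤ ρ → r / 2 ^ m ≤ s →
      dist (a s) (a r) ≤ 2 * C * r := by
    intro m
    induction m with
    | zero =>
      intro r hsr _ hrs
      rw [le_antisymm hsr (by simpa using hrs), dist_self]
      have := hs.trans_le hsr
      positivity
    | succ m ih =>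
      intro r hsr hr hrs
      have hr₀ : 0 < r := hs.trans_le hsr
      rcases le_total (r / 2) s with hhalf | hhalf
      · linarith [h r s hr₀ hr hhalf hsr, mul_nonneg hC hr₀.le]
      · linarith [ih (r / 2) hhalf (by linarith) (by rwa [div_div, ← pow_succ']),
          h r (r / 2) hr₀ hr le_rfl (by linarith), dist_triangle (a s) (a (r / 2)) (a r)]
  obtain ⟨m, hm⟩ := pow_unbounded_of_one_lt (r / s) one_lt_two
  refine hdyadic m r hsr hr ?_
  rw [div_lt_iff₀ hs] at hm
  rw [div_le_iff₀' (by positivity)]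
  exact hm.le

lemma exists_tendsto_nhdsGT_of_dist_le_mul [MetricSpace X] [CompleteSpace X] (hρ : 0 < ρ)
    (h : ∀ r s, 0 < s → s ≤ r → r ≤ ρ → dist (a s) (a r) ≤ C * r) :
    ∃ L, Tendsto a (𝓝[>] 0) (𝓝 L) ∧ ∀ r, 0 < r → r ≤ ρ → dist L (a r) ≤ C * r := by
  have hcauchy : Cauchy (map a (𝓝[>] 0)) := by
    rw [cauchy_map_iff', tendsto_uniformity_iff_dist_tendsto_zero]
    have hmax : Tendsto (fun p : ℝ × ℝ => C * max p.1 p.2) (𝓝[>] 0 ×ˢ 𝓝[>] 0) (𝓝 0) := by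
      have hcont : Tendsto (fun p : ℝ × ℝ => C * max p.1 p.2) (𝓝 (0, 0)) (𝓝 (C * max 0 0)) :=
        Continuous.tendsto (by fun_prop) _
      rw [max_self, mul_zero, nhds_prod_eq] at hcont
      exact hcont.mono_left (prod_mono inf_le_left inf_le_left)
    refine squeeze_zero' (.of_forall fun _ => dist_nonneg) ?_ hmax
    filter_upwards [prod_mem_prod (Ioc_mem_nhdsGT hρ) (Ioc_mem_nhdsGT hρ)] with p ⟨hr, hs⟩
    rcases le_total p.1 p.2 with hle | hle
    · simpa [max_eq_right hle] using h _ _ hr.1 hle hs.2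
    · simpa [max_eq_left hle, dist_comm] using h _ _ hs.1 hle hr.2
  obtain ⟨L, hL⟩ := cauchy_map_iff_exists_tendsto.1 hcauchy
  refine ⟨L, hL, fun r hr hrρ => le_of_tendsto (hL.dist tendsto_const_nhds) ?_⟩
  filter_upwards [Ioc_mem_nhdsGT hr] with s hs
  exact h r s hs.1 hs.2 hrρ

end AverageConvergence

section LipschitzOn

variable {X Y : Type*} [PseudoMetricSpace X] [PseudoMetricSpace Y] {F : X → Y} {S : Set X}

lemma exists_lipschitzOnWith_of_isBounded_image {K : ℝ≥0} {δ : ℝ} (hδ : 0 < δ)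
    (hF : Bornology.IsBounded (F '' S))
    (hloc : ∀ x ∈ S, ∀ y ∈ S, dist x y ≤ δ → dist (F x) (F y) ≤ K * dist x y) :
    ∃ K', LipschitzOnWith K' F S := by
  refine ⟨K + (diam (F '' S) / δ).toNNReal, .of_dist_le_mul fun x hx y hy => ?_⟩
  rw [NNReal.coe_add, Real.coe_toNNReal _ (div_nonneg diam_nonneg hδ.le), add_mul]
  rcases le_total (dist x y) δ with hle | hle
  · exact (hloc x hx y hy hle).trans (le_add_of_nonneg_right (by positivity))
  · calc dist (F x) (F y) ≤ diam (F '' S) :=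
          dist_le_diam_of_mem hF (mem_image_of_mem F hx) (mem_image_of_mem F hy)
      _ = diam (F '' S) / δ * δ := (div_mul_cancel₀ _ hδ.ne').symm
      _ ≤ diam (F '' S) / δ * dist x y := by gcongr
      _ ≤ K * dist x y + diam (F '' S) / δ * dist x y := le_add_of_nonneg_left (by positivity)

end LipschitzOn

section Averages

variable {α F : Type*} [MeasurableSpace α] [NormedAddCommGroup F] [NormedSpace ℝ F]
  {μ : Measure α} {s t : Set α} {f : α → F}

lemma enorm_setAverage_sub_setAverage_mul_le [CompleteSpace F] (hs : μ s ≠ ∞) (ht : μ t ≠ ∞)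
    (hfs : IntegrableOn f s μ) (hft : IntegrableOn f t μ) :
    ‖(⨍ y in s, f y ∂μ) - ⨍ z in t, f z ∂μ‖ₑ * (μ s * μ t)
      ≤ ∫⁻ y in s, ∫⁻ z in t, ‖f y - f z‖ₑ ∂μ ∂μ := by
  have hconst : ∀ {s : Set α}, μ s ≠ ∞ → ∀ c : F, Integrable (fun _ => c) (μ.restrict s) :=
    fun hs _ => integrableOn_const hs
  have hinner : ∀ y, ∫ z in t, (f y - f z) ∂μ = μ.real t • f y - ∫ z in t, f z ∂μ := fun y => by
    rw [integral_sub (hconst ht _) hft, setIntegral_const]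
  have houter : ∫ y in s, ∫ z in t, (f y - f z) ∂μ ∂μ
      = (μ.real s * μ.real t) • ((⨍ y in s, f y ∂μ) - ⨍ z in t, f z ∂μ) := by
    simp_rw [hinner]
    rw [integral_sub (hfs.fun_smul _) (hconst hs _), setIntegral_const, integral_smul,
      ← measure_smul_setAverage f hs, ← measure_smul_setAverage f ht, smul_sub, mul_smul,
      mul_smul, smul_comm (μ.real t) (μ.real s) (⨍ y in s, f y ∂μ)]
  have hmeasure : ‖μ.real s * μ.real t‖ₑ = μ s * μ t := by
    rw [enorm_mul, Real.enorm_of_nonneg measureReal_nonneg, Real.enorm_of_nonneg measureReal_nonneg,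
      ofReal_measureReal hs, ofReal_measureReal ht]
  calc ‖(⨍ y in s, f y ∂μ) - ⨍ z in t, f z ∂μ‖ₑ * (μ s * μ t)
      = ‖∫ y in s, ∫ z in t, (f y - f z) ∂μ ∂μ‖ₑ := by
        rw [houter, enorm_smul, hmeasure, mul_comm]
    _ ≤ ∫⁻ y in s, ‖∫ z in t, (f y - f z) ∂μ‖ₑ ∂μ := enorm_integral_le_lintegral_enorm _
    _ ≤ ∫⁻ y in s, ∫⁻ z in t, ‖f y - f z‖ₑ ∂μ ∂μ :=
        lintegral_mono fun y => enorm_integral_le_lintegral_enorm _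

lemma norm_setAverage_le (hst : s ⊆ t) (hf : IntegrableOn f t μ) :
    ‖⨍ y in s, f y ∂μ‖ ≤ (μ.real s)⁻¹ * ∫ y in t, ‖f y‖ ∂μ := by
  rw [setAverage_eq, norm_smul, norm_inv, Real.norm_of_nonneg measureReal_nonneg]
  gcongr
  exact (norm_integral_le_integral_norm _).trans
    (setIntegral_mono_set hf.norm (.of_forall fun _ => norm_nonneg _) (.of_forall hst))

end Averages

section PreciseRepresentative

variable {n : ℕ} {Ω S : Set (En n)} {f : En n → ℝ} {g : En n → En n} {x y : En n} {ρ r s : ℝ}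
  {M : ℝ≥0}

lemma lintegral_lintegral_enorm_sub_ball_le (hfg : HasWeakGradientOn Ω f g)
    (hf : LocallyIntegrableOn f Ω) (hg : LocallyIntegrableOn g Ω)
    (hρ : 0 < ρ) (hΩ : closedBall x (2 * ρ) ⊆ Ω) (hr : r ≤ ρ) :
    ∫⁻ y in ball x r, ∫⁻ z in ball x r, ‖f y - f z‖ₑ
      ≤ 2 * ENNReal.ofReal r * (2 ^ n * volume (ball x r) * ∫⁻ p in ball x r, ‖g p‖ₑ) := by
  obtain ⟨u, d, hud, hu, -, hd, hu_eq, hd_eq⟩ :=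
    exists_hasWeakGradientOn_univ_eqOn_ball hfg hf hg hρ hΩ
  have hball : ball x r ⊆ ball x ρ := ball_subset_ball hr
  have hdiam : ediam (ball x r) ≤ 2 * ENNReal.ofReal r := by
    rw [← eball_ofReal]
    exact ediam_eball_le
  calc ∫⁻ y in ball x r, ∫⁻ z in ball x r, ‖f y - f z‖ₑ
      = ∫⁻ y in ball x r, ∫⁻ z in ball x r, ‖u y - u z‖ₑ :=
        setLIntegral_congr_fun measurableSet_ball fun y hy =>
          setLIntegral_congr_fun measurableSet_ball fun z hz => by
            rw [hu_eq (hball hy), hu_eq (hball hz)]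
    _ ≤ ediam (ball x r) * (2 ^ n * volume (ball x r) * ∫⁻ p in ball x r, ‖d p‖ₑ) :=
        lintegral_lintegral_enorm_sub_le_of_hasWeakGradientOn hud hu hd (convex_ball x r)
          measurableSet_ball isBounded_ball
    _ = ediam (ball x r) * (2 ^ n * volume (ball x r) * ∫⁻ p in ball x r, ‖g p‖ₑ) := by
        rw [setLIntegral_congr_fun measurableSet_ball fun p hp => by rw [hd_eq (hball hp)]]
    _ ≤ 2 * ENNReal.ofReal r * (2 ^ n * volume (ball x r) * ∫⁻ p in ball x r, ‖g p‖ₑ) := by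
        gcongr

lemma volume_ball_le_two_pow_mul (x y : En n) (hr : 0 < r) (hs : r / 2 ≤ s) :
    volume (ball x r) ≤ 2 ^ n * volume (ball y s) := by
  have hs₀ : 0 < s := (half_pos hr).trans_le hs
  rw [Measure.addHaar_ball_of_pos _ _ hr, Measure.addHaar_ball_of_pos _ _ hs₀,
    finrank_euclideanSpace_fin, ← mul_assoc]
  gcongr
  rw [ENNReal.ofReal_pow hr.le, ENNReal.ofReal_pow hs₀.le, ← mul_pow]
  gcongr
  rw [← ENNReal.ofReal_ofNat, ← ENNReal.ofReal_mul zero_le_two]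
  exact ENNReal.ofReal_le_ofReal (by linarith)

lemma dist_ballAvg_le (hfg : HasWeakGradientOn Ω f g)
    (hf : LocallyIntegrableOn f Ω) (hg : LocallyIntegrableOn g Ω)
    (hρ : 0 < ρ) (hΩ : closedBall x (2 * ρ) ⊆ Ω)
    (hM : localMaximal volume (fun y => ‖g y‖ₑ) ρ x ≤ M)
    (hr : 0 < r) (hrρ : r ≤ ρ) (hs : r / 2 ≤ s) (hsub : ball y s ⊆ ball x r) :
    dist (ballAvg f y s) (ballAvg f x r) ≤ 2 * 4 ^ n * M * r := by
  have hs₀ : 0 < s := (half_pos hr).trans_le hs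
  have hfx : IntegrableOn f (ball x r) := (hf.integrableOn_compact_subset hΩ
    (isCompact_closedBall x _)).mono_set (ball_subset_closedBall.trans
      (closedBall_subset_closedBall (by linarith)))
  have hV₀ : volume (ball y s) * volume (ball x r) ≠ 0 :=
    mul_ne_zero (measure_ball_pos _ _ hs₀).ne' (measure_ball_pos _ _ hr).ne'
  have hV : volume (ball y s) * volume (ball x r) ≠ ∞ :=
    ENNReal.mul_ne_top measure_ball_lt_top.ne measure_ball_lt_top.ne
  have hmaximal : ∫⁻ p in ball x r, ‖g p‖ₑ ≤ M * (2 ^ n * volume (ball y s)) :=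
    (lintegral_ball_le_localMaximal_mul ⟨hr, hrρ⟩ measure_ball_lt_top.ne).trans
      (mul_le_mul' hM (volume_ball_le_two_pow_mul x y hr hs))
  suffices h : ‖ballAvg f y s - ballAvg f x r‖ₑ ≤ ENNReal.ofReal (2 * 4 ^ n * M * r) by
    rw [← ofReal_norm, ← dist_eq_norm] at h
    exact (ENNReal.ofReal_le_ofReal_iff (by positivity)).1 h
  rw [← ENNReal.mul_le_mul_iff_left hV₀ hV]
  calc ‖ballAvg f y s - ballAvg f x r‖ₑ * (volume (ball y s) * volume (ball x r))
      ≤ ∫⁻ y in ball y s, ∫⁻ z in ball x r, ‖f y - f z‖ₑ :=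
        enorm_setAverage_sub_setAverage_mul_le measure_ball_lt_top.ne measure_ball_lt_top.ne
          (hfx.mono_set hsub) hfx
    _ ≤ ∫⁻ y in ball x r, ∫⁻ z in ball x r, ‖f y - f z‖ₑ := lintegral_mono_set hsub
    _ ≤ 2 * ENNReal.ofReal r * (2 ^ n * volume (ball x r) * (M * (2 ^ n * volume (ball y s)))) :=
        (lintegral_lintegral_enorm_sub_ball_le hfg hf hg hρ hΩ hrρ).trans (by gcongr)
    _ = ENNReal.ofReal (2 * 4 ^ n * M * r) * (volume (ball y s) * volume (ball x r)) := by
        rw [ENNReal.ofReal_mul (by positivity), ENNReal.ofReal_mul (by positivity),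
          ENNReal.ofReal_mul (by positivity), ENNReal.ofReal_pow (by positivity),
          ENNReal.ofReal_coe_nnreal, ENNReal.ofReal_ofNat, ENNReal.ofReal_ofNat,
          show (4 : ℝ≥0∞) = 2 * 2 by norm_num, mul_pow]
        ring

lemma preciseRep_eq_of_tendsto {L : ℝ} (h : Tendsto (ballAvg f x) (𝓝[>] 0) (𝓝 L)) :
    preciseRep f x = L := by
  have hex : ∃ L : ℝ, Tendsto (fun r => ballAvg f x r) (𝓝[>] 0) (𝓝 L) := ⟨L, h⟩
  rw [preciseRep, dif_pos hex]
  exact tendsto_nhds_unique hex.choose_spec h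

lemma dist_preciseRep_ballAvg_le (hfg : HasWeakGradientOn Ω f g)
    (hf : LocallyIntegrableOn f Ω) (hg : LocallyIntegrableOn g Ω)
    (hρ : 0 < ρ) (hΩ : closedBall x (2 * ρ) ⊆ Ω)
    (hM : localMaximal volume (fun y => ‖g y‖ₑ) ρ x ≤ M) (hr : 0 < r) (hrρ : r ≤ ρ) :
    dist (preciseRep f x) (ballAvg f x r) ≤ 2 * (2 * 4 ^ n * M) * r := by
  obtain ⟨L, hL, hdist⟩ := exists_tendsto_nhdsGT_of_dist_le_mul (a := ballAvg f x) hρ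
    fun r s => dist_le_two_mul_of_dyadic (C := 2 * 4 ^ n * M) (by positivity)
      fun r s hr hrρ hs hsr =>
        dist_ballAvg_le hfg hf hg hρ hΩ hM hr hrρ hs (ball_subset_ball hsr)
  rw [preciseRep_eq_of_tendsto hL]
  exact hdist r hr hrρ

lemma dist_preciseRep_le (hfg : HasWeakGradientOn Ω f g)
    (hf : LocallyIntegrableOn f Ω) (hg : LocallyIntegrableOn g Ω)
    (hρ : 0 < ρ) (hxΩ : closedBall x (2 * ρ) ⊆ Ω) (hyΩ : closedBall y (2 * ρ) ⊆ Ω)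
    (hMx : localMaximal volume (fun z => ‖g z‖ₑ) ρ x ≤ M)
    (hMy : localMaximal volume (fun z => ‖g z‖ₑ) ρ y ≤ M) (hxy : dist x y ≤ ρ / 2) :
    dist (preciseRep f x) (preciseRep f y) ≤ 4 ^ (n + 2) * M * dist x y := by
  set δ := dist x y
  rcases eq_or_lt_of_le (dist_nonneg : 0 ≤ δ) with hδ₀ | hδ₀
  · rw [dist_eq_zero.1 hδ₀.symm]
    simp only [dist_self]
    positivity
  have hball : ball y δ ⊆ ball x (2 * δ) := ball_subset_ball' (by rw [dist_comm y x]; linarith)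
  calc dist (preciseRep f x) (preciseRep f y)
      ≤ dist (preciseRep f x) (ballAvg f x (2 * δ)) + dist (ballAvg f x (2 * δ)) (ballAvg f y δ)
          + dist (ballAvg f y δ) (preciseRep f y) := dist_triangle4 _ _ _ _
    _ ≤ 2 * (2 * 4 ^ n * M) * (2 * δ) + 2 * 4 ^ n * M * (2 * δ) + 2 * (2 * 4 ^ n * M) * δ := by
        gcongr
        · exact dist_preciseRep_ballAvg_le hfg hf hg hρ hxΩ hMx (by linarith) (by linarith)
        · rw [dist_comm]
          exact dist_ballAvg_le hfg hf hg hρ hxΩ hMx (by linarith) (by linarith) (by linarith) hball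
        · rw [dist_comm]
          exact dist_preciseRep_ballAvg_le hfg hf hg hρ hyΩ hMy hδ₀ (by linarith)
    _ = 4 ^ (n + 2) * M * δ := by ring

lemma isBounded_preciseRep_image (hfg : HasWeakGradientOn Ω f g)
    (hf : LocallyIntegrableOn f Ω) (hg : LocallyIntegrableOn g Ω)
    (hρ : 0 < ρ) (hS : Bornology.IsBounded S) (hSΩ : cthickening (2 * ρ) S ⊆ Ω)
    (hM : ∀ x ∈ S, localMaximal volume (fun y => ‖g y‖ₑ) ρ x ≤ M) :
    Bornology.IsBounded (preciseRep f '' S) := by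
  have hfi : IntegrableOn f (cthickening (2 * ρ) S) :=
    hf.integrableOn_compact_subset hSΩ (isCompact_of_isClosed_isBounded isClosed_cthickening
      hS.cthickening)
  refine isBounded_iff_forall_norm_le.2 ⟨2 * (2 * 4 ^ n * M) * ρ
    + (volume.real (ball (0 : En n) ρ))⁻¹ * ∫ y in cthickening (2 * ρ) S, ‖f y‖, ?_⟩
  rintro _ ⟨x, hx, rfl⟩
  have hball : closedBall x (2 * ρ) ⊆ cthickening (2 * ρ) S := closedBall_subset_cthickening hx _
  have havg : ‖ballAvg f x ρ‖
      ≤ (volume.real (ball (0 : En n) ρ))⁻¹ * ∫ y in cthickening (2 * ρ) S, ‖f y‖ := by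
    rw [← Measure.addHaar_real_ball_center volume x]
    exact norm_setAverage_le (ball_subset_closedBall.trans
      ((closedBall_subset_closedBall (by linarith)).trans hball)) hfi
  have hdist := dist_preciseRep_ballAvg_le hfg hf hg hρ (hball.trans hSΩ) (hM x hx) hρ le_rfl
  rw [dist_eq_norm] at hdist
  linarith [norm_sub_norm_le (preciseRep f x) (ballAvg f x ρ)]

theorem exists_lipschitzOnWith_preciseRep (hfg : HasWeakGradientOn Ω f g)
    (hf : LocallyIntegrableOn f Ω) (hg : LocallyIntegrableOn g Ω)
    (hρ : 0 < ρ) (hS : Bornology.IsBounded S) (hSΩ : cthickening (2 * ρ) S ⊆ Ω)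
    (hM : ∀ x ∈ S, localMaximal volume (fun y => ‖g y‖ₑ) ρ x ≤ M) :
    ∃ K, LipschitzOnWith K (preciseRep f) S := by
  have hball : ∀ x ∈ S, closedBall x (2 * ρ) ⊆ Ω := fun x hx =>
    (closedBall_subset_cthickening hx _).trans hSΩ
  refine exists_lipschitzOnWith_of_isBounded_image (K := 4 ^ (n + 2) * M) (half_pos hρ)
    (isBounded_preciseRep_image hfg hf hg hρ hS hSΩ hM) fun x hx y hy hxy => ?_
  push_cast
  exact dist_preciseRep_le hfg hf hg hρ (hball x hx) (hball y hy) (hM x hx) (hM y hy) hxy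

end PreciseRepresentative

section LipschitzExhaustion

variable {n : ℕ} {Ω : Set (En n)} {f : En n → ℝ} {g : En n → En n} {h : En n → Fin n → En n}
  {k : ℕ}

/-- The sets `C_k`: points of the ball of radius `k`, at distance at least `3 / (k + 1)` from the
complement of `Ω`, where the averages of `‖g‖` over balls of radius at most `1 / (k + 1)` are
bounded by `k`. -/
def maximalSublevel (Ω : Set (En n)) (g : En n → En n) (k : ℕ) : Set (En n) :=
  {x ∈ closedBall 0 k \ thickening (3 / (k + 1)) Ωᶜ |
    localMaximal volume (fun y => ‖g y‖ₑ) (1 / (k + 1)) x ≤ k}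

lemma isClosed_maximalSublevel : IsClosed (maximalSublevel Ω g k) :=
  (isClosed_closedBall.sdiff isOpen_thickening).inter
    ((lowerSemicontinuous_localMaximal volume _ _).isClosed_preimage _)

lemma maximalSublevel_subset_succ : maximalSublevel Ω g k ⊆ maximalSublevel Ω g (k + 1) := by
  have hk : (k : ℝ) ≤ (k + 1 : ℕ) := by simp
  rintro x ⟨⟨hxk, hxΩ⟩, hx⟩
  refine ⟨⟨closedBall_subset_closedBall hk hxk, fun hmem => hxΩ (thickening_mono ?_ _ hmem)⟩,
    (localMaximal_mono_radius ?_).trans (hx.trans ?_)⟩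
  · gcongr
  · gcongr
  · exact_mod_cast k.le_succ

lemma cthickening_maximalSublevel_subset :
    cthickening (2 * (1 / (k + 1))) (maximalSublevel Ω g k) ⊆ Ω := by
  have hlt : 2 * (1 / ((k : ℝ) + 1)) < 3 / (k + 1) := by
    rw [mul_one_div]
    gcongr
    norm_num
  intro z hz
  obtain ⟨x, hx, hzx⟩ :=
    mem_thickening_iff.1 (cthickening_subset_thickening' (by positivity) hlt _ hz)
  by_contra hzΩ
  exact hx.1.2 (mem_thickening_iff.2 ⟨z, hzΩ, by rwa [dist_comm]⟩)

lemma maximalSublevel_subset : maximalSublevel Ω g k ⊆ Ω :=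
  (self_subset_cthickening _).trans cthickening_maximalSublevel_subset

lemma diff_iUnion_maximalSublevel_subset (hΩ : IsOpen Ω) :
    Ω \ ⋃ k, maximalSublevel Ω g k
      ⊆ {x ∈ Ω | ∀ ρ > 0, localMaximal volume (fun y => ‖g y‖ₑ) ρ x = ∞} := by
  rintro x ⟨hxΩ, hx⟩
  refine ⟨hxΩ, fun ρ hρ => of_not_not fun hfinite => hx (mem_iUnion.2 ?_)⟩
  obtain ⟨ε, hε, hball⟩ := isOpen_iff.1 hΩ x hxΩ
  obtain ⟨m, hm⟩ := ENNReal.exists_nat_gt hfinite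
  have hlim : Tendsto (fun k : ℕ => 1 / ((k : ℝ) + 1)) atTop (𝓝 0) :=
    tendsto_one_div_add_atTop_nhds_zero_nat
  obtain ⟨k, hxk, hmk, hkρ, hkε⟩ :=
    ((tendsto_natCast_atTop_atTop.eventually_ge_atTop ‖x‖).and
      ((eventually_ge_atTop m).and ((hlim.eventually_le_const hρ).and
        (hlim.eventually_le_const (div_pos hε three_pos))))).exists
  refine ⟨k, ⟨mem_closedBall_zero_iff.2 hxk, fun hthick => ?_⟩,
    (localMaximal_mono_radius hkρ).trans (hm.le.trans (by exact_mod_cast hmk))⟩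
  obtain ⟨z, hz, hxz⟩ := mem_thickening_iff.1 hthick
  refine hz (hball ?_)
  rw [mem_ball, dist_comm]
  refine hxz.trans_le ?_
  rw [← mul_one_div]
  linarith

lemma cap_empty {p : ℝ} (hp : 0 < p) : cap p (∅ : Set (En n)) = 0 := by
  refine le_antisymm ?_ zero_le
  refine (iInf₂_le ∅ ⟨subset_rfl, isOpen_empty⟩).trans (iSup₂_le fun F hF => ?_)
  refine (iInf₂_le (fun _ => (0 : ℝ)) ⟨contDiff_const, .zero, fun x hx => (hF.1 hx).elim⟩).trans ?_
  simp [ENNReal.zero_rpow_of_pos hp]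

lemma MemW2pLoc.locallyIntegrableOn (hf : MemW2pLoc 1 Ω f g h) (hΩ : IsOpen Ω) :
    LocallyIntegrableOn f Ω ∧ LocallyIntegrableOn g Ω := by
  obtain ⟨hfm, hgm, -, -, hintegrable⟩ := hf
  simp only [Real.rpow_one] at hintegrable
  simp only [locallyIntegrableOn_iff hΩ.isLocallyClosed]
  exact ⟨fun K hK hKc => (integrable_norm_iff hfm.restrict).1 (hintegrable K hK hKc).1,
    fun K hK hKc => (integrable_norm_iff hgm.restrict).1 (hintegrable K hK hKc).2.1⟩

lemma lipschitzOnQE_maximalSublevel (hΩ : IsOpen Ω) (hf : MemW2pLoc 1 Ω f g h) (k : ℕ) :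
    LipschitzOnQE 1 (preciseRep f) (maximalSublevel Ω g k) := by
  obtain ⟨hfi, hgi⟩ := hf.locallyIntegrableOn hΩ
  have hbounded : Bornology.IsBounded (maximalSublevel Ω g k) :=
    isBounded_closedBall.subset fun x hx => hx.1.1
  obtain ⟨K, hK⟩ := exists_lipschitzOnWith_preciseRep (M := k) hf.2.2.1 hfi hgi
    Nat.one_div_pos_of_nat hbounded cthickening_maximalSublevel_subset fun x hx => by
      exact_mod_cast hx.2
  exact ⟨∅, empty_subset _, cap_empty one_pos, K, hK.mono sdiff_subset⟩

end LipschitzExhaustion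

/-- Lipschitz approximation of `W^{2,1}_loc(Ω)` functions with exceptional set of
`(n-1)`-Hausdorff measure zero. -/
theorem lipschitz_approx_W21_hausdorff {n : ℕ} (Ω : Set (En n)) (hΩ : IsOpen Ω)
    (f : En n → ℝ) (g : En n → En n) (h : En n → Fin n → En n)
    (hf : MemW2pLoc 1 Ω f g h) :
    ∃ C : ℕ → Set (En n),
      (∀ k, IsClosed (C k)) ∧ (∀ k, C k ⊆ C (k + 1)) ∧ (∀ k, C k ⊆ Ω) ∧
      (∀ k, LipschitzOnQE 1 (preciseRep f) (C k)) ∧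
      μH[(n : ℝ) - 1] (Ω \ ⋃ k, C k) = 0 := by
  have hnull : μH[(n : ℝ) - 1] (Ω \ ⋃ k, maximalSublevel Ω g k) = 0 :=
    measure_mono_null (diff_iUnion_maximalSublevel_subset hΩ)
      (hausdorffMeasure_forall_localMaximal_enorm_euclidean_eq_top hΩ hf.2.1
        (hf.locallyIntegrableOn hΩ).2 hf.2.2.2.1)
  exact ⟨maximalSublevel Ω g, fun _ => isClosed_maximalSublevel,
    fun _ => maximalSublevel_subset_succ, fun _ => maximalSublevel_subset,
    lipschitzOnQE_maximalSublevel hΩ hf, hnull⟩
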